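/- arXiv:2310.19118 — 6 statements merged into one kernel-verified Lean document; each statement's English description precedes it below -/
import Mathlib

section
/- Let n ≥ 1 be an integer and s ∈ (0,1). Then the integral ∫_{ℝⁿ} (1 − cos ζ₁)/|ζ|^{n+2s} dζ is finite, where ζ₁ denotes the first coordinate of ζ ∈ ℝⁿ. -/
open MeasureTheory Filter Metric Set
open scoped Topology RealInnerProductSpace

/-- For `n ≥ 1` and `s ∈ (0,1)`, the integral
`∫_{ℝⁿ} (1 − cos ζ₁)/|ζ|^{n+2s} dζ` is finite (the integrand is nonnegative,
so finiteness is equivalent to integrability). -/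
theorem fractional_normalization_constant_finite
    (n : ℕ) (hn : 1 ≤ n) (s : ℝ) (hs : s ∈ Set.Ioo (0:ℝ) 1) :
    MeasureTheory.Integrable (fun ζ : EuclideanSpace ℝ (Fin n) =>
      (1 - Real.cos (ζ ⟨0, hn⟩)) / ‖ζ‖ ^ ((n : ℝ) + 2 * s)) := by
  obtain ⟨hs0, hs1⟩ := hs
  haveI : Nonempty (Fin n) := ⟨⟨0, hn⟩⟩
  have key : Integrable (fun ζ : EuclideanSpace ℝ (Fin n) =>
      min (‖ζ‖ ^ 2) 2 / ‖ζ‖ ^ ((n : ℝ) + 2 * s)) := by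
    rw [integrable_fun_norm_addHaar volume
      (f := fun r : ℝ => min (r ^ 2) 2 / r ^ ((n : ℝ) + 2 * s))]
    rw [finrank_euclideanSpace_fin]
    have hmeas : Measurable (fun y : ℝ =>
        y ^ (n - 1) • (min (y ^ 2) 2 / y ^ ((n : ℝ) + 2 * s))) := by
      simp only [smul_eq_mul]
      fun_prop
    have hpow : ∀ y : ℝ, 0 < y → ∀ c : ℝ, y ^ (n - 1) * (c / y ^ ((n : ℝ) + 2 * s))
        = c * y ^ (-1 - 2 * s) := by
      intro y hy c
      have h1 : y ^ (n - 1) = y ^ ((n : ℝ) - 1) := by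
        rw [← Real.rpow_natCast, Nat.cast_sub hn, Nat.cast_one]
      have h2 : (-1 - 2 * s) = ((n : ℝ) - 1) - ((n : ℝ) + 2 * s) := by ring
      rw [h1, h2, Real.rpow_sub hy ((n : ℝ) - 1)]
      ring
    have hnn : ∀ y : ℝ, 0 < y →
        0 ≤ y ^ (n - 1) • (min (y ^ 2) 2 / y ^ ((n : ℝ) + 2 * s)) := by
      intro y hy
      have : (0:ℝ) ≤ min (y ^ 2) 2 := le_min (sq_nonneg y) zero_le_two
      simp only [smul_eq_mul]
      positivity
    have hsplit : Ioi (0:ℝ) = Ioo 0 2 ∪ Ioi 1 := by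
      ext x
      simp only [mem_Ioi, mem_union, mem_Ioo]
      constructor
      · intro h
        by_cases h2 : x < 2
        · exact Or.inl ⟨h, h2⟩
        · right; linarith
      · rintro (h | h)
        · exact h.1
        · linarith
    rw [hsplit]
    refine IntegrableOn.union ?_ ?_
    · have hi : IntegrableOn (fun y : ℝ => y ^ (1 - 2 * s)) (Ioo 0 2) :=
        (intervalIntegral.integrableOn_Ioo_rpow_iff two_pos).2 (by linarith)
      refine Integrable.mono' hi hmeas.aestronglyMeasurable ?_
      refine ae_restrict_of_forall_mem measurableSet_Ioo fun y hy => ?_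
      rw [Real.norm_of_nonneg (hnn y hy.1), smul_eq_mul, hpow y hy.1]
      have h3 : y ^ (1 - 2 * s) = y ^ 2 * y ^ (-1 - 2 * s) := by
        rw [← Real.rpow_natCast y 2, ← Real.rpow_add hy.1]
        congr 1
        push_cast
        ring
      rw [h3]
      exact mul_le_mul_of_nonneg_right (min_le_left _ _) (Real.rpow_nonneg hy.1.le _)
    · have hi : IntegrableOn (fun y : ℝ => 2 * y ^ (-1 - 2 * s)) (Ioi 1) :=
        (integrableOn_Ioi_rpow_of_lt (by linarith) one_pos).const_mul 2
      refine Integrable.mono' hi hmeas.aestronglyMeasurable ?_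
      refine ae_restrict_of_forall_mem measurableSet_Ioi fun y hy => ?_
      have hy0 : (0:ℝ) < y := one_pos.trans hy
      rw [Real.norm_of_nonneg (hnn y hy0), smul_eq_mul, hpow y hy0]
      exact mul_le_mul_of_nonneg_right (min_le_right _ _) (Real.rpow_nonneg hy0.le _)
  refine Integrable.mono' key ?_ (ae_of_all _ fun ζ => ?_)
  · refine Measurable.aestronglyMeasurable ?_
    fun_prop
  · have hc := Real.cos_le_one (ζ ⟨0, hn⟩)
    have hc' := Real.neg_one_le_cos (ζ ⟨0, hn⟩)
    have hq := Real.one_sub_sq_div_two_le_cos (x := ζ ⟨0, hn⟩)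
    have hno : |ζ ⟨0, hn⟩| ≤ ‖ζ‖ := by
      simpa using PiLp.norm_apply_le ζ ⟨0, hn⟩
    have hsq : (ζ ⟨0, hn⟩) ^ 2 ≤ ‖ζ‖ ^ 2 := by
      rw [← sq_abs]
      gcongr
    rw [Real.norm_of_nonneg (div_nonneg (by linarith) (Real.rpow_nonneg (norm_nonneg _) _))]
    refine div_le_div_of_nonneg_right (le_min ?_ ?_) (Real.rpow_nonneg (norm_nonneg _) _)
    · nlinarith [sq_nonneg (ζ ⟨0, hn⟩)]
    · linarith
end

section
/- Let n ≥ 1 and s ∈ (0,1). Then ∫_{ℝⁿ} (1 − cos ζ₁)/|ζ|^{n+2s} dζ = π^{n/2} Γ(1−s) / (s 4^s Γ((n+2s)/2)), where ζ₁ is the first coordinate of ζ; equivalently, the normalization constant c_{n,s} := (∫_{ℝⁿ} (1 − cos ζ₁)/|ζ|^{n+2s} dζ)^{-1} equals s 4^s Γ((n+2s)/2) / (π^{n/2} Γ(1−s)). -/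
open MeasureTheory Filter Metric Set
open scoped Topology

lemma aux_gauss_int (n : ℕ) (t : ℝ) (ht : 0 < t) :
    Integrable (fun ζ : EuclideanSpace ℝ (Fin n) => Real.exp (-t * ‖ζ‖ ^ 2)) := by
  have h := (GaussianFourier.integrable_cexp_neg_mul_sq_norm_add_of_euclideanSpace
    (b := (t : ℂ)) (by simpa using ht) 0 (0 : EuclideanSpace ℝ (Fin n))).re
  refine h.congr (Eventually.of_forall fun ζ => ?_)
  simp only [zero_mul, add_zero]
  have : (-(t : ℂ) * (‖ζ‖ : ℂ) ^ 2) = ((-t * ‖ζ‖ ^ 2 : ℝ) : ℂ) := by push_cast; ring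
  rw [this, ← Complex.ofReal_exp]
  exact Complex.ofReal_re _

lemma aux_cos (n : ℕ) (i : Fin n) (t : ℝ) (ht : 0 < t) :
    ∫ ζ : EuclideanSpace ℝ (Fin n), Real.cos (ζ i) * Real.exp (-t * ‖ζ‖ ^ 2)
      = (Real.pi / t) ^ ((n : ℝ) / 2) * Real.exp (-1 / (4 * t)) := by
  have hb : 0 < (t : ℂ).re := by simpa using ht
  have h := GaussianFourier.integral_cexp_neg_mul_sq_norm_add_of_euclideanSpace
    hb Complex.I (EuclideanSpace.single i (1 : ℝ))
  have hi := GaussianFourier.integrable_cexp_neg_mul_sq_norm_add_of_euclideanSpace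
    hb Complex.I (EuclideanSpace.single i (1 : ℝ))
  have h2 := integral_re hi
  rw [h] at h2
  convert h2 using 1
  · congr 1
    ext ζ
    have : (-(t : ℂ) * (‖ζ‖ : ℂ) ^ 2 + Complex.I * (inner ℝ (EuclideanSpace.single i (1 : ℝ)) ζ : ℝ))
        = ((-t * ‖ζ‖ ^ 2 : ℝ) : ℂ) + (ζ i : ℝ) * Complex.I := by
      simp [EuclideanSpace.inner_single_left]; ring
    rw [this]
    simp only [RCLike.re_to_complex, Complex.exp_re, Complex.add_re, Complex.add_im,
      Complex.ofReal_re, Complex.ofReal_im, Complex.re_ofReal_mul, Complex.im_ofReal_mul,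
      Complex.I_re, Complex.I_im, mul_zero, mul_one, add_zero, zero_add]
    ring
  · have : ((Real.pi : ℂ) / t) ^ ((Fintype.card (Fin n) : ℂ) / 2) *
        Complex.exp (Complex.I ^ 2 * (‖EuclideanSpace.single i (1 : ℝ)‖ : ℂ) ^ 2 / (4 * t))
        = (((Real.pi / t) ^ ((n : ℝ) / 2) * Real.exp (-1 / (4 * t)) : ℝ) : ℂ) := by
      push_cast
      rw [Complex.ofReal_cpow (by positivity)]
      simp
    rw [this]
    exact (Complex.ofReal_re _).symm

lemma aux_inner (n : ℕ) (i : Fin n) (t : ℝ) (ht : 0 < t) :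
    ∫⁻ ζ : EuclideanSpace ℝ (Fin n),
      ENNReal.ofReal ((1 - Real.cos (ζ i)) * Real.exp (-t * ‖ζ‖ ^ 2))
      = ENNReal.ofReal ((Real.pi / t) ^ ((n : ℝ) / 2) * (1 - Real.exp (-1 / (4 * t)))) := by
  have h1 := aux_gauss_int n t ht
  have h2 : Integrable (fun ζ : EuclideanSpace ℝ (Fin n) =>
      Real.cos (ζ i) * Real.exp (-t * ‖ζ‖ ^ 2)) := by
    refine h1.mono (by fun_prop) (Eventually.of_forall fun ζ => ?_)
    rw [norm_mul]
    exact mul_le_of_le_one_left (norm_nonneg _) (Real.abs_cos_le_one _)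
  have h3 : ∀ ζ : EuclideanSpace ℝ (Fin n), (1 - Real.cos (ζ i)) * Real.exp (-t * ‖ζ‖ ^ 2)
      = Real.exp (-t * ‖ζ‖ ^ 2) - Real.cos (ζ i) * Real.exp (-t * ‖ζ‖ ^ 2) := fun ζ => by ring
  have h4 := GaussianFourier.integral_rexp_neg_mul_sq_norm (V := EuclideanSpace ℝ (Fin n)) ht
  rw [← ofReal_integral_eq_lintegral_ofReal]
  · simp_rw [h3]
    rw [integral_sub h1 h2, aux_cos n i t ht, h4]
    simp only [finrank_euclideanSpace, Fintype.card_fin]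
    congr 1; ring
  · simp_rw [h3]
    exact h1.sub h2
  · refine Eventually.of_forall fun ζ => ?_
    exact mul_nonneg (sub_nonneg.2 (Real.cos_le_one _)) (Real.exp_pos _).le

lemma aux_gamma (a r : ℝ) (ha : 0 < a) (hr : 0 < r) :
    ∫⁻ t in Ioi (0 : ℝ), ENNReal.ofReal (t ^ (a - 1) * Real.exp (-(r * t)))
      = ENNReal.ofReal ((1 / r) ^ a * Real.Gamma a) := by
  have h := Real.integral_rpow_mul_exp_neg_mul_Ioi ha hr
  have hpos : 0 < (1 / r) ^ a * Real.Gamma a :=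
    mul_pos (by positivity) (Real.Gamma_pos_of_pos ha)
  rw [← h, ofReal_integral_eq_lintegral_ofReal]
  · by_contra hc
    rw [integral_undef hc] at h
    exact hpos.ne h
  · filter_upwards [ae_restrict_mem measurableSet_Ioi] with t ht
    have : (0 : ℝ) < t := ht
    positivity

lemma aux_exp (x : ℝ) (hx : 0 < x) :
    ∫⁻ v in Ioi (0 : ℝ), (if v < x then ENNReal.ofReal (Real.exp (-v)) else 0)
      = ENNReal.ofReal (1 - Real.exp (-x)) := by
  have e1 : (fun v : ℝ => (if v < x then ENNReal.ofReal (Real.exp (-v)) else 0))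
      = (Iio x).indicator (fun v => ENNReal.ofReal (Real.exp (-v))) := by
    ext v; simp [indicator]
  rw [e1, lintegral_indicator measurableSet_Iio, Measure.restrict_restrict measurableSet_Iio,
    show Iio x ∩ Ioi 0 = Ioo 0 x by ext; simp [and_comm], Measure.restrict_congr_set Ioo_ae_eq_Ioc,
    ← ofReal_integral_eq_lintegral_ofReal, ← intervalIntegral.integral_of_le hx.le]
  · simp
  · exact (Continuous.integrableOn_Icc (by fun_prop)).mono_set Ioc_subset_Icc_self
  · exact Eventually.of_forall fun v => (Real.exp_pos _).le

lemma aux_pow (s x : ℝ) (hs : 0 < s) (hx : 0 < x) :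
    ∫⁻ v in Ioi (0 : ℝ), (if v < x then ENNReal.ofReal (v ^ (s - 1)) else 0)
      = ENNReal.ofReal (x ^ s / s) := by
  have e1 : (fun v : ℝ => (if v < x then ENNReal.ofReal (v ^ (s - 1)) else 0))
      = (Iio x).indicator (fun v => ENNReal.ofReal (v ^ (s - 1))) := by
    ext v; simp [indicator]
  rw [e1, lintegral_indicator measurableSet_Iio, Measure.restrict_restrict measurableSet_Iio,
    show Iio x ∩ Ioi 0 = Ioo 0 x by ext; simp [and_comm], Measure.restrict_congr_set Ioo_ae_eq_Ioc,
    ← ofReal_integral_eq_lintegral_ofReal, ← intervalIntegral.integral_of_le hx.le]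
  · rw [integral_rpow (Or.inl (by linarith))]
    simp [hs.ne']
  · exact (intervalIntegrable_iff_integrableOn_Ioc_of_le hx.le).1
      (intervalIntegral.intervalIntegrable_rpow' (by linarith))
  · filter_upwards [ae_restrict_mem measurableSet_Ioc] with t ht
    have : (0 : ℝ) < t := ht.1
    positivity

lemma aux_outer (s : ℝ) (hs : s ∈ Set.Ioo (0:ℝ) 1) :
    ∫⁻ t in Ioi (0 : ℝ), ENNReal.ofReal (t ^ (s - 1) * (1 - Real.exp (-1 / (4 * t))))
      = ENNReal.ofReal (Real.Gamma (1 - s) / (s * 4 ^ s)) := by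
  obtain ⟨hs0, hs1⟩ := hs
  have hsw := lintegral_lintegral_swap (μ := volume.restrict (Ioi (0 : ℝ)))
    (ν := volume.restrict (Ioi (0 : ℝ)))
    (f := fun t v => if 4 * t * v < 1 then
      ENNReal.ofReal (t ^ (s - 1)) * ENNReal.ofReal (Real.exp (-v)) else 0)
    (by
      refine Measurable.aemeasurable ?_
      refine Measurable.ite ?_ (by fun_prop) measurable_const
      exact measurableSet_lt (by fun_prop) measurable_const)
  have hL : ∀ t ∈ Ioi (0 : ℝ), (∫⁻ v in Ioi (0 : ℝ), if 4 * t * v < 1 then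
      ENNReal.ofReal (t ^ (s - 1)) * ENNReal.ofReal (Real.exp (-v)) else 0)
      = ENNReal.ofReal (t ^ (s - 1) * (1 - Real.exp (-1 / (4 * t)))) := by
    intro t ht
    have ht' : (0 : ℝ) < t := ht
    rw [ENNReal.ofReal_mul (by positivity), show -1 / (4 * t) = -(1 / (4 * t)) by ring,
      ← aux_exp (1 / (4 * t)) (by positivity), ← lintegral_const_mul' _ _ ENNReal.ofReal_ne_top]
    congr 1; ext v
    simp only [lt_div_iff₀ (show 0 < 4 * t by positivity), mul_comm v, mul_ite, mul_zero]
  have hR : ∀ v ∈ Ioi (0 : ℝ), (∫⁻ t in Ioi (0 : ℝ), if 4 * t * v < 1 then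
      ENNReal.ofReal (t ^ (s - 1)) * ENNReal.ofReal (Real.exp (-v)) else 0)
      = ENNReal.ofReal (1 / (s * 4 ^ s)) *
        ENNReal.ofReal (v ^ ((1 - s) - 1) * Real.exp (-(1 * v))) := by
    intro v hv
    have hv' : (0 : ℝ) < v := hv
    have : 1 / (s * 4 ^ s) * (v ^ ((1 - s) - 1) * Real.exp (-(1 * v)))
        = Real.exp (-v) * ((1 / (4 * v)) ^ s / s) := by
      rw [Real.div_rpow (by norm_num) (by positivity), Real.mul_rpow (by norm_num) hv'.le,
        show 1 - s - 1 = -s by ring, Real.rpow_neg hv'.le]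
      simp
      field_simp
    rw [← ENNReal.ofReal_mul (by positivity), this, ENNReal.ofReal_mul (by positivity),
      ← aux_pow s _ hs0 (by positivity), ← lintegral_const_mul' _ _ ENNReal.ofReal_ne_top]
    congr 1; ext t
    have : 4 * t * v < 1 ↔ t < 1 / (4 * v) := by
      rw [lt_div_iff₀ (by positivity)]
      ring_nf
    simp only [this, mul_ite, mul_zero, mul_comm (ENNReal.ofReal (t ^ (s - 1)))]
  rw [setLIntegral_congr_fun measurableSet_Ioi hL,
    setLIntegral_congr_fun measurableSet_Ioi hR,
    lintegral_const_mul' _ _ ENNReal.ofReal_ne_top, aux_gamma (1 - s) 1 (by linarith) one_pos,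
    ← ENNReal.ofReal_mul (by positivity)] at hsw
  rw [hsw]
  congr 1
  simp
  ring

/-- For `n ≥ 1` and `s ∈ (0,1)`,
`∫_{ℝⁿ} (1 − cos ζ₁)/|ζ|^{n+2s} dζ = π^{n/2} Γ(1−s) / (s 4^s Γ((n+2s)/2))`,
i.e. the normalization constant `c_{n,s}` equals `s 4^s Γ((n+2s)/2)/(π^{n/2} Γ(1−s))`. -/
theorem fractional_normalization_constant_value
    (n : ℕ) (hn : 1 ≤ n) (s : ℝ) (hs : s ∈ Set.Ioo (0:ℝ) 1) :
    ∫ ζ : EuclideanSpace ℝ (Fin n),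
        (1 - Real.cos (ζ ⟨0, hn⟩)) / ‖ζ‖ ^ ((n : ℝ) + 2 * s)
      = Real.pi ^ ((n : ℝ) / 2) * Real.Gamma (1 - s) /
          (s * (4 : ℝ) ^ s * Real.Gamma (((n : ℝ) + 2 * s) / 2)) := by
  have hs0 := hs.1
  have hs1 := hs.2
  set i : Fin n := ⟨0, hn⟩
  set a : ℝ := ((n : ℝ) + 2 * s) / 2 with ha
  have ha0 : 0 < a := by positivity
  have hG : 0 < Real.Gamma a := Real.Gamma_pos_of_pos ha0
  have hG1 : 0 < Real.Gamma (1 - s) := Real.Gamma_pos_of_pos (by linarith)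
  have hcos : ∀ ζ : EuclideanSpace ℝ (Fin n), 0 ≤ 1 - Real.cos (ζ i) :=
    fun ζ => sub_nonneg.2 (Real.cos_le_one _)
  have hsw := lintegral_lintegral_swap (μ := (volume : Measure (EuclideanSpace ℝ (Fin n))))
    (ν := volume.restrict (Ioi (0 : ℝ)))
    (f := fun ζ t => ENNReal.ofReal (1 - Real.cos (ζ i)) *
      ENNReal.ofReal (t ^ (a - 1) * Real.exp (-(‖ζ‖ ^ 2 * t))))
    (by
      refine Measurable.aemeasurable ?_
      fun_prop)
  have hL : ∀ ζ : EuclideanSpace ℝ (Fin n), (∫⁻ t in Ioi (0 : ℝ),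
      ENNReal.ofReal (1 - Real.cos (ζ i)) *
        ENNReal.ofReal (t ^ (a - 1) * Real.exp (-(‖ζ‖ ^ 2 * t))))
      = ENNReal.ofReal (Real.Gamma a) *
        ENNReal.ofReal ((1 - Real.cos (ζ i)) / ‖ζ‖ ^ ((n : ℝ) + 2 * s)) := by
    intro ζ
    rw [lintegral_const_mul' _ _ ENNReal.ofReal_ne_top]
    by_cases hz : ζ = 0
    · simp [hz]
    have hz' : 0 < ‖ζ‖ := norm_pos_iff.2 hz
    rw [aux_gamma a _ ha0 (by positivity), ← ENNReal.ofReal_mul (hcos ζ),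
      ← ENNReal.ofReal_mul hG.le]
    congr 1
    rw [Real.div_rpow (by norm_num) (by positivity), ← Real.rpow_natCast, ← Real.rpow_mul hz'.le,
      show ((2 : ℕ) : ℝ) * a = (n : ℝ) + 2 * s by rw [ha]; push_cast; ring]
    simp
    ring
  have hR : ∀ t ∈ Ioi (0 : ℝ), (∫⁻ ζ : EuclideanSpace ℝ (Fin n),
      ENNReal.ofReal (1 - Real.cos (ζ i)) *
        ENNReal.ofReal (t ^ (a - 1) * Real.exp (-(‖ζ‖ ^ 2 * t))))
      = ENNReal.ofReal (Real.pi ^ ((n : ℝ) / 2)) *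
        ENNReal.ofReal (t ^ (s - 1) * (1 - Real.exp (-1 / (4 * t)))) := by
    intro t ht
    have ht' : (0 : ℝ) < t := ht
    have e : Real.pi ^ ((n : ℝ) / 2) * (t ^ (s - 1) * (1 - Real.exp (-1 / (4 * t))))
        = t ^ (a - 1) * ((Real.pi / t) ^ ((n : ℝ) / 2) * (1 - Real.exp (-1 / (4 * t)))) := by
      rw [show a - 1 = (s - 1) + (n : ℝ) / 2 by rw [ha]; ring, Real.rpow_add ht',
        Real.div_rpow Real.pi_pos.le ht'.le]
      have : t ^ ((n : ℝ) / 2) ≠ 0 := by positivity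
      field_simp
    rw [← ENNReal.ofReal_mul (by positivity), e, ENNReal.ofReal_mul (by positivity),
      ← aux_inner n i t ht', ← lintegral_const_mul' _ _ ENNReal.ofReal_ne_top]
    congr 1; ext ζ
    rw [← ENNReal.ofReal_mul (hcos ζ), ← ENNReal.ofReal_mul (by positivity)]
    congr 1
    rw [show -(‖ζ‖ ^ 2 * t) = -t * ‖ζ‖ ^ 2 by ring]
    ring
  simp_rw [hL] at hsw
  rw [setLIntegral_congr_fun measurableSet_Ioi hR,
    lintegral_const_mul' _ _ ENNReal.ofReal_ne_top,
    lintegral_const_mul' _ _ ENNReal.ofReal_ne_top, aux_outer s hs] at hsw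
  rw [integral_eq_lintegral_of_nonneg_ae
    (Eventually.of_forall fun ζ => div_nonneg (hcos ζ) (by positivity))
    (Measurable.aestronglyMeasurable (by fun_prop))]
  have h := congrArg ENNReal.toReal hsw
  rw [ENNReal.toReal_mul, ENNReal.toReal_mul, ENNReal.toReal_ofReal hG.le,
    ENNReal.toReal_ofReal (by positivity), ENNReal.toReal_ofReal (by positivity)] at h
  rw [eq_div_iff (by positivity)]
  have h4 : (0 : ℝ) < s * 4 ^ s := by positivity
  rw [← mul_div_assoc, eq_div_iff h4.ne'] at h
  rw [← h]
  ring
end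

section
/- Let s ∈ (0,1) and define u : ℝ → ℝ by u(x) = (max(x,0))^s. Then: (i) for every x > 0, the principal value limit lim_{ε→0⁺} ∫_{{y : |y−x| > ε}} (u(x) − u(y))/|x−y|^{1+2s} dy exists and equals 0 (i.e., u is s-harmonic on (0,∞)); and (ii) there exists a constant C > 0 depending only on s such that for every x < 0 the integral ∫_{ℝ} (u(x) − u(y))/|x−y|^{1+2s} dy converges absolutely and equals −C |x|^{−s}. -/
open MeasureTheory Filter Metric Set
open scoped Topology

noncomputable def kerK (s a y : ℝ) : ℝ :=
  ((max a 0) ^ s - (max y 0) ^ s) / |a - y| ^ (1 + 2 * s)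

lemma kerK_scale (s a y r : ℝ) (hr : 0 < r) :
    kerK s (r * a) (r * y) = r ^ (-1 - s) * kerK s a y := by
  unfold kerK
  have h1 : ∀ z : ℝ, max (r * z) 0 = r * max z 0 := fun z => by
    rw [mul_max_of_nonneg _ _ hr.le, mul_zero]
  rw [h1, h1, ← mul_sub, abs_mul, abs_of_pos hr, Real.mul_rpow hr.le (le_max_right _ _),
    Real.mul_rpow hr.le (le_max_right _ _), Real.mul_rpow hr.le (abs_nonneg _)]
  have h2 : r ^ (-1 - s) = r ^ s / r ^ (1 + 2 * s) := by
    rw [← Real.rpow_sub hr]; congr 1; ring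
  rw [h2, ← mul_sub, mul_div_mul_comm]

lemma kerK_meas (s a : ℝ) : Measurable (kerK s a) := by
  unfold kerK
  fun_prop

lemma kerK_neg_nonpos (s y : ℝ) (hs : s ∈ Set.Ioo (0:ℝ) 1) (hy : y ≤ 0) :
    kerK s (-1) y = 0 := by
  unfold kerK
  simp [max_eq_right hy, Real.zero_rpow hs.1.ne']

lemma kerK_neg_pos (s y : ℝ) (hs : s ∈ Set.Ioo (0:ℝ) 1) (hy : 0 < y) :
    kerK s (-1) y = - (y ^ s / (1 + y) ^ (1 + 2 * s)) := by
  unfold kerK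
  have : |-1 - y| = 1 + y := by rw [abs_of_neg (by linarith)]; ring
  rw [this, max_eq_left hy.le, max_eq_right (by norm_num), Real.zero_rpow hs.1.ne']
  ring

lemma kerK_neg_integrable (s : ℝ) (hs : s ∈ Set.Ioo (0:ℝ) 1) : Integrable (kerK s (-1)) := by
  have hi : IntegrableOn (kerK s (-1)) (Ioi 0) := by
    have h0 := integrableOn_add_rpow_Ioi_of_lt (a := -1 - s) (m := 1) (c := 0)
      (by linarith [hs.1]) (by norm_num)
    refine Integrable.mono' h0 (kerK_meas s (-1)).aestronglyMeasurable ?_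
    filter_upwards [ae_restrict_mem measurableSet_Ioi] with y hy
    have hy : 0 < y := hy
    rw [kerK_neg_pos s y hs hy, norm_neg, Real.norm_of_nonneg (by positivity),
      div_le_iff₀ (by positivity), add_comm y 1, ← Real.rpow_add (by positivity)]
    ring_nf
    exact Real.rpow_le_rpow hy.le (by linarith) hs.1.le
  have := (integrableOn_iff_integrable_of_support_subset (s := Ioi (0:ℝ)) (f := kerK s (-1))
    (μ := volume) ?_).1 hi
  · exact this
  · intro y hy
    by_contra h
    exact hy (kerK_neg_nonpos s y hs (not_lt.1 h))

lemma kerK_neg_integral (s : ℝ) (hs : s ∈ Set.Ioo (0:ℝ) 1) : 0 < - ∫ y, kerK s (-1) y := by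
  rw [← integral_neg]
  refine (integral_pos_iff_support_of_nonneg_ae (Eventually.of_forall fun y => ?_)
    (kerK_neg_integrable s hs).neg).2 ?_
  · rcases le_or_gt y 0 with h | h
    · simp [kerK_neg_nonpos s y hs h]
    · have : 0 ≤ y ^ s / (1 + y) ^ (1 + 2 * s) := by positivity
      simpa [kerK_neg_pos s y hs h] using this
  · refine lt_of_lt_of_le (b := volume (Ioi (0:ℝ))) (by simp) (measure_mono fun y hy => ?_)
    have hy : 0 < y := hy
    have : 0 < y ^ s / (1 + y) ^ (1 + 2 * s) := by positivity
    simpa [Function.mem_support, kerK_neg_pos s y hs hy] using this.ne'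

lemma part2 (s : ℝ) (hs : s ∈ Set.Ioo (0:ℝ) 1) :
    ∃ C : ℝ, 0 < C ∧ ∀ x : ℝ, x < 0 →
      Integrable (kerK s x) ∧ (∫ y : ℝ, kerK s x y) = -C * |x| ^ (-s) := by
  refine ⟨- ∫ y, kerK s (-1) y, kerK_neg_integral s hs, fun x hx => ?_⟩
  have hr : 0 < |x| := abs_pos.2 hx.ne
  have e : ∀ y, kerK s x (|x| * y) = |x| ^ (-1 - s) * kerK s (-1) y := fun y => by
    rw [← kerK_scale _ _ _ _ hr]; congr 1; rw [abs_of_neg hx]; ring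
  constructor
  · rw [← integrable_comp_mul_left_iff _ hr.ne']
    simp_rw [e]
    exact (kerK_neg_integrable s hs).const_mul _
  · have := Measure.integral_comp_mul_left (kerK s x) (|x|)
    simp_rw [e] at this
    rw [integral_const_mul, abs_of_pos (inv_pos.2 hr), smul_eq_mul] at this
    have h3 : |x| ^ (-s) = |x| * |x| ^ (-1 - s) := by
      rw [← Real.rpow_one_add' hr.le (by linarith [hs.1])]; congr 1; ring
    rw [h3, neg_neg]
    field_simp at this
    linarith

noncomputable def FF (s t : ℝ) : ℝ := (1 - t ^ s) ^ 2 * (1 - t) ^ (-(2 * s)) / (2 * s)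
noncomputable def h1 (s t : ℝ) : ℝ := (1 - t ^ s) / (1 - t) ^ (1 + 2 * s)
noncomputable def h2 (s t : ℝ) : ℝ := t ^ (s - 1) * ((1 - t ^ s) / (1 - t) ^ (1 + 2 * s))

lemma FF_deriv (s t : ℝ) (hs : s ∈ Set.Ioo (0:ℝ) 1) (ht : t ∈ Ioo (0:ℝ) 1) :
    HasDerivAt (FF s) (h1 s t - h2 s t) t := by
  have ht0 := ht.1
  have h1t : 0 < 1 - t := by linarith [ht.2]
  have hs0 := hs.1
  have d1 : HasDerivAt (fun t : ℝ => t ^ s) (s * t ^ (s - 1)) t :=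
    Real.hasDerivAt_rpow_const (Or.inl ht0.ne')
  have d2 : HasDerivAt (fun t : ℝ => (1 - t) ^ (-(2 * s)))
      (-1 * (-(2 * s)) * (1 - t) ^ (-(2 * s) - 1)) t :=
    ((hasDerivAt_id t).const_sub 1).rpow_const (Or.inl h1t.ne')
  have d3 := (((d1.const_sub 1).pow 2).mul d2).div_const (2 * s)
  refine d3.congr_deriv ?_
  unfold h1 h2
  have e1 : (1 - t) ^ (-(2 * s) - 1) = ((1 - t) ^ (1 + 2 * s))⁻¹ := by
    rw [← Real.rpow_neg h1t.le]; congr 1; ring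
  have e2 : (1 - t) ^ (-(2 * s)) = (1 - t) * ((1 - t) ^ (1 + 2 * s))⁻¹ := by
    rw [← Real.rpow_neg h1t.le, ← Real.rpow_one_add' h1t.le (by linarith)]; congr 1; ring
  have e3 : t ^ s = t * t ^ (s - 1) := by
    rw [← Real.rpow_one_add' ht0.le (by linarith)]; congr 1; ring
  simp only [Pi.pow_apply]
  rw [e1, e2, e3]
  generalize t ^ (s - 1) = A
  generalize ((1 - t) ^ (1 + 2 * s)) = B
  rw [div_eq_mul_inv _ B]
  generalize B⁻¹ = B
  field_simp
  ring

lemma h1_cont (s a : ℝ) (hs : s ∈ Set.Ioo (0:ℝ) 1) (ha : a < 1) :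
    ContinuousOn (h1 s) (Iic a) := by
  unfold h1
  have hs0 := hs.1
  refine ContinuousOn.div ?_ ?_ ?_
  · exact continuousOn_const.sub (continuousOn_id.rpow_const fun t _ => Or.inr hs0.le)
  · exact (continuousOn_const.sub continuousOn_id).rpow_const fun t _ => Or.inr (by linarith)
  · intro t ht
    have : 0 < 1 - t := by have : t ≤ a := ht; linarith
    positivity

lemma FF_cont (s a : ℝ) (hs : s ∈ Set.Ioo (0:ℝ) 1) (ha : a < 1) :
    ContinuousOn (FF s) (Iic a) := by
  unfold FF
  have hs0 := hs.1
  refine ContinuousOn.div_const (ContinuousOn.mul (ContinuousOn.pow ?_ 2) ?_) _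
  · exact continuousOn_const.sub (continuousOn_id.rpow_const fun t _ => Or.inr hs0.le)
  · refine (continuousOn_const.sub continuousOn_id).rpow_const fun t ht => Or.inl ?_
    have : t ≤ a := ht
    change 1 - t ≠ 0
    exact (by linarith : (0:ℝ) < 1 - t).ne'

lemma h1_ii (s a b : ℝ) (hs : s ∈ Set.Ioo (0:ℝ) 1) (ha : a < 1) (hb : b < 1) :
    IntervalIntegrable (h1 s) volume a b :=
  ((h1_cont s (max a b) hs (max_lt ha hb)).mono (fun _ ht => ht.2)).intervalIntegrable

lemma h2_ii (s a b : ℝ) (hs : s ∈ Set.Ioo (0:ℝ) 1) (ha : a < 1) (hb : b < 1) :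
    IntervalIntegrable (h2 s) volume a b :=
  (intervalIntegral.intervalIntegrable_rpow' (by linarith [hs.1])).mul_continuousOn
    ((h1_cont s (max a b) hs (max_lt ha hb)).mono (fun _ ht => ht.2))

lemma ftc (s a : ℝ) (hs : s ∈ Set.Ioo (0:ℝ) 1) (ha0 : 0 ≤ a) (ha : a < 1) :
    (∫ t in (0:ℝ)..a, h1 s t) - ∫ t in (0:ℝ)..a, h2 s t = FF s a - 1 / (2 * s) := by
  rw [← intervalIntegral.integral_sub (h1_ii s 0 a hs one_pos ha) (h2_ii s 0 a hs one_pos ha)]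
  rw [intervalIntegral.integral_eq_sub_of_hasDerivAt_of_le ha0
    ((FF_cont s a hs ha).mono fun _ ht => ht.2)
    (fun t ht => FF_deriv s t hs ⟨ht.1, ht.2.trans ha⟩)
    ((h1_ii s 0 a hs one_pos ha).sub (h2_ii s 0 a hs one_pos ha))]
  congr 1
  simp [FF, Real.zero_rpow hs.1.ne']

lemma left_int (s : ℝ) (hs : s ∈ Set.Ioo (0:ℝ) 1) :
    IntegrableOn (kerK s 1) (Iic 0) ∧ ∫ y in Iic (0:ℝ), kerK s 1 y = 1 / (2 * s) := by
  have hs0 := hs.1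
  have mp : MeasurePreserving (fun y : ℝ => 1 - y) volume volume :=
    Measure.measurePreserving_sub_left volume 1
  have me : MeasurableEmbedding (fun y : ℝ => 1 - y) :=
    (MeasurableEquiv.subLeft (1:ℝ)).measurableEmbedding
  have pre : (fun y : ℝ => 1 - y) ⁻¹' (Ici 1) = Iic 0 := by
    ext y; simp
  have e : EqOn (kerK s 1) ((fun t : ℝ => t ^ (-(1 + 2 * s))) ∘ (fun y : ℝ => 1 - y)) (Iic 0) := by
    intro y hy
    have hy : y ≤ 0 := hy
    have h : 0 < 1 - y := by linarith
    simp [kerK, max_eq_right hy, Real.zero_rpow hs.1.ne', abs_of_pos h]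
    rw [← Real.rpow_neg h.le]; congr 1; ring
  constructor
  · rw [integrableOn_congr_fun e measurableSet_Iic, ← pre, mp.integrableOn_comp_preimage me,
      integrableOn_Ici_iff_integrableOn_Ioi]
    exact integrableOn_Ioi_rpow_of_lt (by linarith) one_pos
  · rw [setIntegral_congr_fun measurableSet_Iic e, ← pre]
    have := mp.setIntegral_preimage_emb me (fun t : ℝ => t ^ (-(1 + 2 * s))) (Ici 1)
    simp only [Function.comp_def]
    rw [this, integral_Ici_eq_integral_Ioi, integral_Ioi_rpow_of_lt (by linarith) one_pos]
    rw [Real.one_rpow, ← neg_div_neg_eq]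
    congr 1 <;> ring

lemma mid_int (s a : ℝ) (hs : s ∈ Set.Ioo (0:ℝ) 1) (ha0 : 0 ≤ a) (ha : a < 1) :
    IntegrableOn (kerK s 1) (Ioc 0 a) ∧
      ∫ y in Ioc (0:ℝ) a, kerK s 1 y = ∫ t in (0:ℝ)..a, h1 s t := by
  have e : EqOn (kerK s 1) (h1 s) (Ioc 0 a) := by
    intro y hy
    have h : 0 < 1 - y := by linarith [hy.2]
    simp [kerK, h1, max_eq_left hy.1.le, abs_of_pos h]
  constructor
  · rw [integrableOn_congr_fun e measurableSet_Ioc]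
    exact (intervalIntegrable_iff_integrableOn_Ioc_of_le ha0).1 (h1_ii s 0 a hs one_pos ha)
  · rw [setIntegral_congr_fun measurableSet_Ioc e, intervalIntegral.integral_of_le ha0]

lemma right_int (s b : ℝ) (hs : s ∈ Set.Ioo (0:ℝ) 1) (hb0 : 0 < b) (hb : b < 1) :
    IntegrableOn (kerK s 1) (Ici b⁻¹) ∧
      ∫ y in Ici b⁻¹, kerK s 1 y = - ∫ t in (0:ℝ)..b, h2 s t := by
  have hs0 := hs.1
  have e : EqOn (fun t : ℝ => (|(-1:ℝ)| * t ^ ((-1:ℝ) - 1)) •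
      (Ici b⁻¹).indicator (kerK s 1) (t ^ (-1:ℝ)))
      ((Ioc 0 b).indicator (fun t => - h2 s t)) (Ioi 0) := by
    intro t ht
    have ht : 0 < t := ht
    simp only [Real.rpow_neg_one]
    by_cases htb : t ≤ b
    · rw [indicator_of_mem (show t⁻¹ ∈ Ici b⁻¹ from inv_anti₀ ht htb),
        indicator_of_mem (show t ∈ Ioc 0 b from ⟨ht, htb⟩)]
      have h1t : 0 < 1 - t := by linarith
      have hti : 0 < t⁻¹ := inv_pos.2 ht
      have a1 : |1 - t⁻¹| = (1 - t) / t := by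
        rw [abs_sub_comm, show t⁻¹ - 1 = (1 - t) / t by field_simp, abs_of_pos (by positivity)]
      have a2 : t ^ ((-1:ℝ) - 1) = (t * t)⁻¹ := by
        rw [show (-1:ℝ) - 1 = -2 by norm_num, Real.rpow_neg ht.le, Real.rpow_two, sq]
      have a3 : t ^ (1 + 2 * s) = t * (t ^ s * t ^ s) := by
        rw [Real.rpow_add ht, Real.rpow_one, ← Real.rpow_add ht]; congr 2; ring
      have a4 : t ^ (s - 1) = t ^ s / t := by rw [Real.rpow_sub ht, Real.rpow_one]
      have p1 : 0 < t ^ s := by positivity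
      have p2 : 0 < (1 - t) ^ (1 + 2 * s) := by positivity
      simp only [kerK, h2, max_eq_left hti.le, max_eq_left zero_le_one, Real.one_rpow, a1,
        Real.div_rpow h1t.le ht.le, a2, a3, a4, Real.inv_rpow ht.le, smul_eq_mul, abs_neg, abs_one]
      generalize t ^ s = A at *
      generalize (1 - t) ^ (1 + 2 * s) = B at *
      field_simp
      ring
    · rw [indicator_of_notMem, indicator_of_notMem, smul_zero]
      · exact fun h => htb h.2
      · intro h
        exact htb ((inv_le_inv₀ hb0 ht).1 h)
  have sub1 : Ioi (0:ℝ) ∩ Ici b⁻¹ = Ici b⁻¹ :=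
    inter_eq_right.2 fun y hy => lt_of_lt_of_le (inv_pos.2 hb0) hy
  have sub2 : Ioi (0:ℝ) ∩ Ioc 0 b = Ioc 0 b := inter_eq_right.2 fun y hy => hy.1
  constructor
  · have := (integrableOn_Ioi_comp_rpow_iff ((Ici b⁻¹).indicator (kerK s 1))
      (p := -1) (by norm_num)).1 (by
        rw [integrableOn_congr_fun e measurableSet_Ioi]
        refine Integrable.integrableOn ((integrable_indicator_iff measurableSet_Ioc).2 ?_)
        exact ((intervalIntegrable_iff_integrableOn_Ioc_of_le hb0.le).1
          (h2_ii s 0 b hs one_pos hb)).neg)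
    rw [integrableOn_indicator_iff measurableSet_Ici] at this
    rwa [inter_comm, sub1] at this
  · have := integral_comp_rpow_Ioi ((Ici b⁻¹).indicator (kerK s 1)) (p := -1) (by norm_num)
    rw [setIntegral_congr_fun measurableSet_Ioi e, setIntegral_indicator measurableSet_Ioc,
      setIntegral_indicator measurableSet_Ici, sub1, sub2, integral_neg] at this
    rw [← this, intervalIntegral.integral_of_le hb0.le]

noncomputable def JJ (s ε : ℝ) : ℝ := ∫ y in {y : ℝ | ε < |y - 1|}, kerK s 1 y

lemma JJ_eq (s ε : ℝ) (hs : s ∈ Set.Ioo (0:ℝ) 1) (h0 : 0 < ε) (h : ε < 1) :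
    JJ s ε = FF s (1 - ε) - ∫ t in (1 - ε)..(1 + ε)⁻¹, h2 s t := by
  have hb0 : 0 < (1 + ε)⁻¹ := by positivity
  have hb1 : (1 + ε)⁻¹ < 1 := inv_lt_one_of_one_lt₀ (by linarith)
  have L := left_int s hs
  have M := mid_int s (1 - ε) hs (by linarith) (by linarith)
  have R := right_int s (1 + ε)⁻¹ hs hb0 hb1
  rw [inv_inv] at R
  have T := ftc s (1 - ε) hs (by linarith) (by linarith)
  have A := intervalIntegral.integral_add_adjacent_intervals
    (h2_ii s 0 (1 - ε) hs one_pos (by linarith)) (h2_ii s (1 - ε) (1 + ε)⁻¹ hs (by linarith) hb1)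
  have ae : ({y : ℝ | ε < |y - 1|} : Set ℝ) =ᵐ[volume] ((Iic 0 ∪ Ioc 0 (1 - ε)) ∪ Ici (1 + ε) : Set ℝ) := by
    have hn : ∀ᵐ y : ℝ, y ∉ ({1 - ε, 1 + ε} : Set ℝ) :=
      measure_eq_zero_iff_ae_notMem.1 ((Set.toFinite _).measure_zero _)
    rw [Iic_union_Ioc_eq_Iic (by linarith)]
    refine eventuallyEq_set.2 ?_
    filter_upwards [hn] with y hy
    simp only [mem_insert_iff, mem_singleton_iff, not_or] at hy
    simp only [mem_union, mem_Iic, mem_Ici, lt_abs]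
    constructor
    · rintro (h | h)
      · right; linarith
      · left; linarith
    · rintro (h | h)
      · right; have := lt_of_le_of_ne h hy.1; linarith
      · left; have := lt_of_le_of_ne h (Ne.symm hy.2); linarith
  unfold JJ
  rw [setIntegral_congr_set ae, setIntegral_union _ measurableSet_Ici (L.1.union M.1) R.1,
    setIntegral_union _ measurableSet_Ioc L.1 M.1, L.2, M.2, R.2]
  · linarith
  · rw [Set.disjoint_left]; intro y h1 h2; exact absurd h2.1 (not_lt.2 h1)
  · rw [Iic_union_Ioc_eq_Iic (by linarith), Set.disjoint_left]
    intro y h1 h2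
    have h1 : y ≤ 1 - ε := h1
    have h2 : 1 + ε ≤ y := h2
    linarith

lemma one_sub_le (s t : ℝ) (hs : s ∈ Set.Ioo (0:ℝ) 1) (h0 : 0 < t) (h1 : t < 1) :
    0 ≤ 1 - t ^ s ∧ 1 - t ^ s ≤ 1 - t := by
  constructor
  · linarith [Real.rpow_le_one h0.le h1.le hs.1.le]
  · have := Real.rpow_le_rpow_of_exponent_ge h0 h1.le hs.2.le
    rw [Real.rpow_one] at this
    linarith

lemma JJ_bound (s ε : ℝ) (hs : s ∈ Set.Ioo (0:ℝ) 1) (h0 : 0 < ε) (h : ε < 1 / 2) :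
    ‖JJ s ε‖ ≤ (1 / (2 * s) + 2 * 2 ^ (2 * s)) * ε ^ (2 - 2 * s) := by
  have hs0 := hs.1
  have hs1 := hs.2
  have hb0 : 0 < (1 + ε)⁻¹ := by positivity
  have hb1 : (1 + ε)⁻¹ < 1 := inv_lt_one_of_one_lt₀ (by linarith)
  have hpow : ε ^ (2 - 2 * s) = ε ^ 2 * ε ^ (-(2 * s)) := by
    rw [← Real.rpow_two, ← Real.rpow_add h0]; congr 1
  have hge : 1 - ε ≤ (1 + ε)⁻¹ := by
    rw [← one_div, le_div_iff₀ (by linarith)]; nlinarith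
  have hlen : (1 + ε)⁻¹ - (1 - ε) ≤ ε ^ 2 := by
    have : (1 + ε)⁻¹ - (1 - ε) = ε ^ 2 / (1 + ε) := by field_simp; ring
    rw [this]; exact div_le_self (by positivity) (by linarith)
  have hup : (1 + ε)⁻¹ ≤ 1 - ε / 2 := by
    rw [← one_div, div_le_iff₀ (by linarith)]; nlinarith
  rw [JJ_eq s ε hs h0 (by linarith)]
  have F1 : ‖FF s (1 - ε)‖ ≤ 1 / (2 * s) * ε ^ (2 - 2 * s) := by
    have o := one_sub_le s (1 - ε) hs (by linarith) (by linarith)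
    unfold FF
    rw [sub_sub_cancel] at *
    rw [Real.norm_of_nonneg (by positivity), hpow, one_div, div_eq_inv_mul]
    have : (1 - (1 - ε) ^ s) ^ 2 ≤ ε ^ 2 := by gcongr; exacts [o.1, o.2]
    gcongr
  have F2 : ‖∫ t in (1 - ε)..(1 + ε)⁻¹, h2 s t‖ ≤
      (2 * (2 ^ (2 * s) * ε ^ (-(2 * s)))) * |(1 + ε)⁻¹ - (1 - ε)| := by
    refine intervalIntegral.norm_integral_le_of_norm_le_const fun t ht => ?_
    rw [uIoc_of_le hge] at ht
    have t0 : 1 / 2 < t := by linarith [ht.1]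
    have t1 : ε / 2 ≤ 1 - t := by linarith [ht.2]
    have t2 : 0 < 1 - t := by linarith
    have t3 : 0 < t := by linarith
    have o := one_sub_le s t hs t3 (by linarith)
    unfold h2
    have n1 : 0 ≤ (1 - t ^ s) / (1 - t) ^ (1 + 2 * s) := div_nonneg o.1 (by positivity)
    rw [Real.norm_of_nonneg (mul_nonneg (by positivity) n1)]
    have b1 : t ^ (s - 1) ≤ 2 := by
      calc t ^ (s - 1) ≤ t ^ (-1 : ℝ) :=
            Real.rpow_le_rpow_of_exponent_ge t3 (by linarith) (by linarith)
        _ = t⁻¹ := Real.rpow_neg_one t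
        _ ≤ 2 := by rw [inv_le_comm₀ t3 (by norm_num)]; linarith
    have b2 : (1 - t ^ s) / (1 - t) ^ (1 + 2 * s) ≤ 2 ^ (2 * s) * ε ^ (-(2 * s)) := by
      calc (1 - t ^ s) / (1 - t) ^ (1 + 2 * s) ≤ (1 - t) / (1 - t) ^ (1 + 2 * s) := by
            gcongr; linarith [o.2]
        _ = (1 - t) ^ (-(2 * s)) := by
            rw [Real.rpow_add t2, Real.rpow_one, Real.rpow_neg t2.le]; field_simp
        _ ≤ (ε / 2) ^ (-(2 * s)) :=
            Real.rpow_le_rpow_of_nonpos (by positivity) t1 (by linarith)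
        _ = 2 ^ (2 * s) * ε ^ (-(2 * s)) := by
            rw [Real.div_rpow h0.le (by norm_num), Real.rpow_neg (by norm_num : (0:ℝ) ≤ 2)]
            field_simp
    exact mul_le_mul b1 b2 n1 (by norm_num)
  rw [abs_of_nonneg (by linarith)] at F2
  have F3 : (2 * (2 ^ (2 * s) * ε ^ (-(2 * s)))) * ((1 + ε)⁻¹ - (1 - ε)) ≤
      2 * 2 ^ (2 * s) * ε ^ (2 - 2 * s) := by
    rw [hpow]
    calc _ ≤ (2 * (2 ^ (2 * s) * ε ^ (-(2 * s)))) * ε ^ 2 := by gcongr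
      _ = _ := by ring
  calc _ ≤ _ := norm_sub_le _ _
    _ ≤ _ := add_le_add F1 (F2.trans F3)
    _ = _ := by ring

lemma JJ_tendsto (s : ℝ) (hs : s ∈ Set.Ioo (0:ℝ) 1) : Tendsto (JJ s) (𝓝[>] 0) (𝓝 0) := by
  have hs1 := hs.2
  refine squeeze_zero_norm' (a := fun ε => (1 / (2 * s) + 2 * 2 ^ (2 * s)) * ε ^ (2 - 2 * s)) ?_ ?_
  · filter_upwards [Ioo_mem_nhdsGT (show (0:ℝ) < 1 / 2 by norm_num)] with ε hε
    exact JJ_bound s ε hs hε.1 hε.2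
  · have : Tendsto (fun ε : ℝ => (1 / (2 * s) + 2 * 2 ^ (2 * s)) * ε ^ (2 - 2 * s)) (𝓝 0)
        (𝓝 ((1 / (2 * s) + 2 * 2 ^ (2 * s)) * 0 ^ (2 - 2 * s))) :=
      ((Real.continuousAt_rpow_const _ _ (Or.inr (by linarith))).tendsto).const_mul _
    rw [Real.zero_rpow (by linarith), mul_zero] at this
    exact this.mono_left nhdsWithin_le_nhds

lemma scale_JJ (s x ε : ℝ) (hx : 0 < x) :
    ∫ y in {y : ℝ | ε < |y - x|}, kerK s x y = x * x ^ (-1 - s) * JJ s (ε / x) := by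
  have m : ∀ a b : ℝ, MeasurableSet {y : ℝ | a < |y - b|} := fun a b =>
    measurableSet_lt measurable_const (by fun_prop)
  have := Measure.integral_comp_mul_left ({y : ℝ | ε < |y - x|}.indicator (kerK s x)) x
  unfold JJ
  rw [← integral_indicator (m _ _), ← integral_indicator (m _ _)]
  rw [abs_of_pos (inv_pos.2 hx), smul_eq_mul] at this
  have e : ∀ y, {y : ℝ | ε < |y - x|}.indicator (kerK s x) (x * y) =
      x ^ (-1 - s) * {y : ℝ | ε / x < |y - 1|}.indicator (kerK s 1) y := by
    intro y
    have k := kerK_scale s 1 y x hx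
    rw [mul_one] at k
    have c : ε < |x * y - x| ↔ ε / x < |y - 1| := by
      rw [div_lt_iff₀ hx, show x * y - x = (y - 1) * x by ring, abs_mul, abs_of_pos hx]
    simp only [indicator, mem_ofPred_eq, c, k, mul_ite, mul_zero]
  simp_rw [e] at this
  rw [integral_const_mul] at this
  rw [mul_assoc, this, mul_inv_cancel_left₀ (ne_of_gt hx)]

/-- For `s ∈ (0,1)` and `u(x) = (x₊)^s` on `ℝ`:
(i) `u` is `s`-harmonic at every `x > 0` (the principal value limit exists and
equals `0`), and (ii) there is `C > 0`, depending only on `s`, such that for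
every `x < 0` the defining integral converges absolutely and equals `−C|x|^{−s}`. -/
theorem xPlusPowS_sHarmonic (s : ℝ) (hs : s ∈ Set.Ioo (0:ℝ) 1) :
    (∀ x : ℝ, 0 < x →
      Filter.Tendsto
        (fun ε : ℝ => ∫ y in {y : ℝ | ε < |y - x|},
          ((max x 0) ^ s - (max y 0) ^ s) / |x - y| ^ (1 + 2 * s))
        (𝓝[>] (0:ℝ)) (𝓝 0)) ∧
    ∃ C : ℝ, 0 < C ∧ ∀ x : ℝ, x < 0 →
      MeasureTheory.Integrable
        (fun y : ℝ => ((max x 0) ^ s - (max y 0) ^ s) / |x - y| ^ (1 + 2 * s)) ∧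
      (∫ y : ℝ, ((max x 0) ^ s - (max y 0) ^ s) / |x - y| ^ (1 + 2 * s))
        = -C * |x| ^ (-s) := by
  refine ⟨fun x hx => ?_, part2 s hs⟩
  have e := scale_JJ s x
  simp only [kerK] at e
  simp_rw [fun ε => e ε hx]
  have t : Tendsto (fun ε : ℝ => ε / x) (𝓝[>] 0) (𝓝[>] 0) := by
    refine tendsto_nhdsWithin_iff.2 ⟨?_, ?_⟩
    · have : Tendsto (fun ε : ℝ => ε / x) (𝓝 0) (𝓝 (0 / x)) := tendsto_id.div_const x
      rw [zero_div] at this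
      exact this.mono_left nhdsWithin_le_nhds
    · filter_upwards [self_mem_nhdsWithin] with ε hε
      exact div_pos hε hx
  simpa using ((JJ_tendsto s hs).comp t).const_mul (x * x ^ (-1 - s))
end

section
/- Let n ≥ 1, s ∈ (0,1), and set a_{n,s} := (∫_{{z ∈ ℝⁿ : |z| > 1}} (|z|² − 1)^{−s} |z|^{−n} dz)^{-1}. For r > 0 define the s-mean kernel A_r(y) := a_{n,s} · r^{2s} / ((|y|² − r²)^s |y|^n) for |y| > r and A_r(y) := 0 for |y| ≤ r (so that ∫_{{|y| > r}} A_r(y) dy = 1 for every r > 0). Let u ∈ L¹_s(ℝⁿ), let x ∈ ℝⁿ, and assume there exist δ > 0 and ε₀ > 0 such that either 2s + ε₀ ≤ 1 and u is Hölder continuous of exponent 2s + ε₀ on B_δ(x), or 1 < 2s + ε₀ ≤ 2 and u is C¹ on B_δ(x) with gradient Hölder continuous of exponent 2s + ε₀ − 1 there. If u(x) = ∫_{{y : |y| > r}} A_r(y) u(x − y) dy for every sufficiently small r > 0, then u is s-harmonic at x, i.e., lim_{r→0⁺} ∫_{{y : |y| > r}} (u(x) − u(x−y))/|y|^{n+2s}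 dy exists and equals 0. -/
open MeasureTheory Filter Metric Set
open scoped Topology

lemma far_int (n : ℕ) (hn : 1 ≤ n) (p : ℝ) (hp : (n:ℝ) < p) (ρ : ℝ) (hρ : 0 < ρ) :
    IntegrableOn (fun y : EuclideanSpace ℝ (Fin n) => ‖y‖ ^ (-p)) {y | ρ < ‖y‖} := by
  have : NeZero n := ⟨by omega⟩
  have hms : MeasurableSet {y : EuclideanSpace ℝ (Fin n) | ρ < ‖y‖} :=
    measurableSet_lt measurable_const measurable_norm
  rw [← integrable_indicator_iff hms]
  have h := (integrable_fun_norm_addHaar (volume : Measure (EuclideanSpace ℝ (Fin n)))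
    (f := (Ioi ρ).indicator (fun t : ℝ => t ^ (-p)))).2 (by
      rw [finrank_euclideanSpace_fin]
      have h1 := integrableOn_Ioi_rpow_of_lt (a := (n:ℝ) - 1 - p) (by linarith) hρ
      have h2 := (integrable_indicator_iff measurableSet_Ioi).2 h1
      refine (h2.integrableOn (s := Ioi 0)).congr_fun ?_ measurableSet_Ioi
      intro t ht
      by_cases hh : t ∈ Ioi ρ
      · simp only [indicator_of_mem hh, smul_eq_mul]
        rw [sub_eq_add_neg ((n:ℝ)-1), Real.rpow_add ht, ← Real.rpow_natCast]
        congr 2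
        push_cast [hn]; rfl
      · simp [indicator_of_notMem hh])
  refine h.congr (ae_of_all _ fun y => ?_)
  simp [indicator]

lemma near_int (n : ℕ) (hn : 1 ≤ n) (ε : ℝ) (hε : 0 < ε) (ρ : ℝ) :
    IntegrableOn (fun y : EuclideanSpace ℝ (Fin n) => ‖y‖ ^ (ε - n)) {y | ‖y‖ ≤ ρ} := by
  have : NeZero n := ⟨by omega⟩
  have hms : MeasurableSet {y : EuclideanSpace ℝ (Fin n) | ‖y‖ ≤ ρ} :=
    measurableSet_le measurable_norm measurable_const
  rw [← integrable_indicator_iff hms]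
  have h := (integrable_fun_norm_addHaar (volume : Measure (EuclideanSpace ℝ (Fin n)))
    (f := (Iic ρ).indicator (fun t : ℝ => t ^ (ε - n)))).2 (by
      rw [finrank_euclideanSpace_fin]
      have h1 := (intervalIntegral.intervalIntegrable_rpow' (a := 0) (b := ρ) (r := ε - 1)
        (by linarith)).1
      have h2 := (integrable_indicator_iff measurableSet_Ioc).2 h1
      refine (h2.integrableOn (s := Ioi 0)).congr_fun ?_ measurableSet_Ioi
      intro t ht
      by_cases hh : t ∈ Iic ρ
      · have hh' : t ∈ Ioc 0 ρ := ⟨ht, hh⟩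
        simp only [indicator_of_mem hh, indicator_of_mem hh', smul_eq_mul]
        rw [show ε - 1 = ((n:ℝ) - 1) + (ε - n) by ring, Real.rpow_add ht, ← Real.rpow_natCast]
        congr 2
        push_cast [hn]; rfl
      · have hh' : t ∉ Ioc 0 ρ := fun h => hh h.2
        simp [indicator_of_notMem hh, indicator_of_notMem hh'])
  refine h.congr (ae_of_all _ fun y => ?_)
  simp [indicator]

lemma k1_int (n : ℕ) (hn : 1 ≤ n) (s : ℝ) (hs : s ∈ Set.Ioo (0:ℝ) 1) :
    IntegrableOn (fun y : EuclideanSpace ℝ (Fin n) => (‖y‖ ^ 2 - 1) ^ (-s) * ‖y‖ ^ (-(n:ℝ)))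
      {y | 1 < ‖y‖} := by
  have : NeZero n := ⟨by omega⟩
  obtain ⟨hs0, hs1⟩ := hs
  have hms : MeasurableSet {y : EuclideanSpace ℝ (Fin n) | 1 < ‖y‖} :=
    measurableSet_lt measurable_const measurable_norm
  have key : IntegrableOn (fun t : ℝ => t ^ (-1:ℝ) * (t ^ 2 - 1) ^ (-s)) (Ioi 1) := by
    have hm : Measurable (fun t : ℝ => t ^ (-1:ℝ) * (t ^ 2 - 1) ^ (-s)) := by fun_prop
    rw [← Ioc_union_Ioi_eq_Ioi (one_le_two (α := ℝ))]
    refine IntegrableOn.union ?_ ?_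
    · have h1 := (intervalIntegral.intervalIntegrable_rpow' (a := 0) (b := 1) (r := -s)
        (by linarith)).comp_sub_right 1
      norm_num at h1
      have h1 := h1.1
      refine Integrable.mono' h1 hm.aestronglyMeasurable ?_
      refine (ae_restrict_iff' measurableSet_Ioc).2 (ae_of_all _ fun t ht => ?_)
      have h0 : 0 < t - 1 := by linarith [ht.1]
      have h2 : t - 1 ≤ t ^ 2 - 1 := by nlinarith [ht.1]
      rw [Real.norm_of_nonneg (mul_nonneg (Real.rpow_nonneg (by linarith) _) (Real.rpow_nonneg (by linarith) _))]
      have h3 : (t ^ 2 - 1) ^ (-s) ≤ (t - 1) ^ (-s) :=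
        Real.rpow_le_rpow_of_nonpos h0 h2 (by linarith)
      have h4 : t ^ (-1:ℝ) ≤ 1 := Real.rpow_le_one_of_one_le_of_nonpos ht.1.le (by norm_num)
      have h5 : 0 ≤ (t ^ 2 - 1) ^ (-s) := Real.rpow_nonneg (by linarith) _
      nlinarith
    · have h1 := (integrableOn_Ioi_rpow_of_lt (a := -1 - 2 * s) (by linarith)
        (two_pos (α := ℝ))).const_mul ((1/4:ℝ) ^ (-s))
      refine Integrable.mono' h1 hm.aestronglyMeasurable ?_
      refine (ae_restrict_iff' measurableSet_Ioi).2 (ae_of_all _ fun t ht => ?_)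
      have ht : 2 < t := ht
      have ht0 : 0 < t := by linarith
      have h2 : 1/4 * t ^ 2 ≤ t ^ 2 - 1 := by nlinarith
      have h5 : 0 ≤ (t ^ 2 - 1) ^ (-s) := Real.rpow_nonneg (by nlinarith) _
      rw [Real.norm_of_nonneg (by positivity)]
      have h3 : (t ^ 2 - 1) ^ (-s) ≤ (1/4 * t^2) ^ (-s) :=
        Real.rpow_le_rpow_of_nonpos (by positivity) h2 (by linarith)
      rw [Real.mul_rpow (by norm_num) (by positivity), ← Real.rpow_natCast t 2,
        ← Real.rpow_mul ht0.le] at h3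
      have h6 : t ^ (-1 - 2*s) = t ^ (-1:ℝ) * t ^ (((2:ℕ):ℝ) * -s) := by
        rw [← Real.rpow_add ht0]; congr 1; push_cast; ring
      rw [h6]
      calc _ ≤ t ^ (-1:ℝ) * ((1/4:ℝ) ^ (-s) * t ^ (((2:ℕ):ℝ) * -s)) := by
            rw [← Real.rpow_natCast t 2]
            gcongr
        _ = _ := by ring
  rw [← integrable_indicator_iff hms]
  have h := (integrable_fun_norm_addHaar (volume : Measure (EuclideanSpace ℝ (Fin n)))
    (f := (Ioi 1).indicator (fun t : ℝ => (t ^ 2 - 1) ^ (-s) * t ^ (-(n:ℝ))))).2 (by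
      rw [finrank_euclideanSpace_fin]
      have h2 := (integrable_indicator_iff measurableSet_Ioi).2 key
      refine (h2.integrableOn (s := Ioi 0)).congr_fun ?_ measurableSet_Ioi
      intro t ht
      by_cases hh : t ∈ Ioi (1:ℝ)
      · simp only [indicator_of_mem hh, smul_eq_mul]
        rw [show (-1:ℝ) = ((n - 1 : ℕ):ℝ) + -(n:ℝ) by push_cast [hn]; ring,
          Real.rpow_add ht, Real.rpow_natCast t (n - 1)]
        ring
      · simp [indicator_of_notMem hh])
  refine h.congr (ae_of_all _ fun y => ?_)
  simp [indicator]

lemma k1_pos (n : ℕ) (hn : 1 ≤ n) (s : ℝ) (hs : s ∈ Set.Ioo (0:ℝ) 1) :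
    0 < ∫ y in {y : EuclideanSpace ℝ (Fin n) | 1 < ‖y‖},
      (‖y‖ ^ 2 - 1) ^ (-s) * ‖y‖ ^ (-(n:ℝ)) := by
  have : NeZero n := ⟨by omega⟩
  have hop : IsOpen {y : EuclideanSpace ℝ (Fin n) | 1 < ‖y‖} :=
    isOpen_lt continuous_const continuous_norm
  have hpos : ∀ y ∈ {y : EuclideanSpace ℝ (Fin n) | 1 < ‖y‖},
      0 < (‖y‖ ^ 2 - 1) ^ (-s) * ‖y‖ ^ (-(n:ℝ)) := by
    intro y hy
    have hy : 1 < ‖y‖ := hy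
    have h1 : 0 < ‖y‖ ^ 2 - 1 := by nlinarith
    positivity
  rw [setIntegral_pos_iff_support_of_nonneg_ae _ (k1_int n hn s hs)]
  · refine lt_of_lt_of_le (hop.measure_pos volume ?_)
      (measure_mono (fun y hy => ⟨(hpos y hy).ne', hy⟩))
    obtain ⟨y, hy⟩ := NormedSpace.exists_lt_norm ℝ (EuclideanSpace ℝ (Fin n)) 1
    exact ⟨y, hy⟩
  · exact (ae_restrict_iff' hop.measurableSet).2 (ae_of_all _ fun y hy => (hpos y hy).le)

lemma k_scale (n : ℕ) (hn : 1 ≤ n) (s : ℝ) (hs : s ∈ Set.Ioo (0:ℝ) 1) (r : ℝ) (hr : 0 < r) :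
    IntegrableOn (fun y : EuclideanSpace ℝ (Fin n) => (‖y‖ ^ 2 - r ^ 2) ^ (-s) * ‖y‖ ^ (-(n:ℝ)))
      {y | r < ‖y‖} ∧
    ∫ y in {y : EuclideanSpace ℝ (Fin n) | r < ‖y‖},
      (‖y‖ ^ 2 - r ^ 2) ^ (-s) * ‖y‖ ^ (-(n:ℝ)) =
    r ^ (-2 * s) * ∫ y in {y : EuclideanSpace ℝ (Fin n) | 1 < ‖y‖},
      (‖y‖ ^ 2 - 1) ^ (-s) * ‖y‖ ^ (-(n:ℝ)) := by
  have hms : ∀ r : ℝ, MeasurableSet {y : EuclideanSpace ℝ (Fin n) | r < ‖y‖} := fun r =>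
    measurableSet_lt measurable_const measurable_norm
  set F : EuclideanSpace ℝ (Fin n) → ℝ := {y | 1 < ‖y‖}.indicator
    (fun y => (‖y‖ ^ 2 - 1) ^ (-s) * ‖y‖ ^ (-(n:ℝ))) with hF
  have hFi : Integrable F := (integrable_indicator_iff (hms 1)).2 (k1_int n hn s hs)
  have heq : {y | r < ‖y‖}.indicator (fun y : EuclideanSpace ℝ (Fin n) =>
      (‖y‖ ^ 2 - r ^ 2) ^ (-s) * ‖y‖ ^ (-(n:ℝ))) =
      fun y => (r ^ (-2 * s) * r ^ (-(n:ℝ))) * F (r⁻¹ • y) := by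
    funext y
    have hny : ‖r⁻¹ • y‖ = r⁻¹ * ‖y‖ := by
      rw [norm_smul, Real.norm_of_nonneg (by positivity)]
    by_cases hy : r < ‖y‖
    · have hy' : 1 < ‖r⁻¹ • y‖ := by
        rw [hny, ← div_eq_inv_mul, one_lt_div hr]; exact hy
      rw [hF, indicator_of_mem (by exact hy), indicator_of_mem (by exact hy'), hny]
      have hy0 : 0 < ‖y‖ := hr.trans hy
      have h1 : ‖y‖ ^ 2 - r ^ 2 = r ^ 2 * ((r⁻¹ * ‖y‖) ^ 2 - 1) := by field_simp
      have h2 : 0 ≤ (r⁻¹ * ‖y‖) ^ 2 - 1 := by rw [hny] at hy'; nlinarith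
      have h3 : ‖y‖ = r * (r⁻¹ * ‖y‖) := by field_simp
      have h4 : (r ^ 2) ^ (-s) = r ^ (-2 * s) := by
        rw [← Real.rpow_natCast, ← Real.rpow_mul hr.le]; congr 1; push_cast; ring
      rw [h1, Real.mul_rpow (by positivity) h2, h4]
      nth_rewrite 2 [h3]
      rw [Real.mul_rpow hr.le (by positivity)]
      ring
    · have hy' : ¬ 1 < ‖r⁻¹ • y‖ := by
        rw [hny, ← div_eq_inv_mul, one_lt_div hr]; exact hy
      rw [hF, indicator_of_notMem (by exact hy), indicator_of_notMem (by exact hy'), mul_zero]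
  constructor
  · rw [← integrable_indicator_iff (hms r), heq]
    exact ((integrable_comp_smul_iff volume F (inv_ne_zero hr.ne')).2 hFi).const_mul _
  · rw [← integral_indicator (hms r), heq, integral_const_mul,
      Measure.integral_comp_inv_smul_of_nonneg volume F hr.le, finrank_euclideanSpace_fin, hF,
      integral_indicator (hms 1), smul_eq_mul, Real.rpow_neg hr.le (n:ℝ), Real.rpow_natCast]
    field_simp

lemma reg_case (n : ℕ) (s : ℝ) (hs : s ∈ Set.Ioo (0:ℝ) 1)
    (u : EuclideanSpace ℝ (Fin n) → ℝ) (x : EuclideanSpace ℝ (Fin n))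
    (hreg : ∃ δ : ℝ, 0 < δ ∧ ∃ ε₀ : ℝ, 0 < ε₀ ∧
      ((2 * s + ε₀ ≤ 1 ∧
          ∃ C : ℝ, ∀ y ∈ Metric.ball x δ, ∀ z ∈ Metric.ball x δ,
            |u y - u z| ≤ C * ‖y - z‖ ^ (2 * s + ε₀)) ∨
        (1 < 2 * s + ε₀ ∧ 2 * s + ε₀ ≤ 2 ∧
          (∀ y ∈ Metric.ball x δ, DifferentiableAt ℝ u y) ∧
          ∃ C : ℝ, ∀ y ∈ Metric.ball x δ, ∀ z ∈ Metric.ball x δ,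
            ‖fderiv ℝ u y - fderiv ℝ u z‖ ≤ C * ‖y - z‖ ^ (2 * s + ε₀ - 1)))) :
    ∃ δ : ℝ, 0 < δ ∧ ∃ ε : ℝ, 0 < ε ∧ ∃ C B : ℝ, 0 ≤ C ∧ 0 ≤ B ∧
      ∀ y : EuclideanSpace ℝ (Fin n), ‖y‖ < δ →
        |2 * u x - u (x - y) - u (x + y)| ≤ C * ‖y‖ ^ (2 * s + ε) ∧ |u (x - y)| ≤ B := by
  obtain ⟨δ, hδ, ε, hε, h⟩ := hreg
  have hs0 := hs.1
  -- reduce to a linear approximation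
  suffices H : ∃ (C : ℝ) (L : EuclideanSpace ℝ (Fin n) →L[ℝ] ℝ), 0 ≤ C ∧ 
      ∀ y, ‖y‖ < δ → |u (x + y) - u x - L y| ≤ C * ‖y‖ ^ (2 * s + ε) by
    obtain ⟨C, L, hC, hL⟩ := H
    refine ⟨δ, hδ, ε, hε, 2 * C, |u x| + ‖L‖ * δ + C * δ ^ (2 * s + ε), by positivity,
      by positivity, fun y hy => ?_⟩
    have h1 := hL y hy
    have h2 := hL (-y) (by rwa [norm_neg])
    rw [norm_neg, ← sub_eq_add_neg, map_neg] at h2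
    constructor
    · rw [abs_le] at *
      constructor <;> linarith [h1.1, h1.2, h2.1, h2.2]
    · have h3 : |L y| ≤ ‖L‖ * δ := by
        have := L.le_opNorm y
        rw [Real.norm_eq_abs] at this
        exact this.trans (by gcongr)
      have h4 : C * ‖y‖ ^ (2 * s + ε) ≤ C * δ ^ (2 * s + ε) := by gcongr
      have h5 := neg_abs_le (u x)
      have h6 := le_abs_self (u x)
      rw [abs_le] at h2 h3 ⊢
      constructor <;> linarith [h2.1, h2.2, h3.1, h3.2]
  rcases h with ⟨-, C, hC⟩ | ⟨h1, -, hd, C, hC⟩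
  · refine ⟨|C|, 0, abs_nonneg _, fun y hy => ?_⟩
    have := hC (x + y) (by simpa using hy) x (by simpa using hδ)
    rw [add_sub_cancel_left] at this
    simp only [zero_apply, sub_zero]
    exact this.trans (by gcongr; exact le_abs_self C)
  · refine ⟨|C|, fderiv ℝ u x, abs_nonneg _, fun y hy => ?_⟩
    have hsub : closedBall x ‖y‖ ⊆ ball x δ := closedBall_subset_ball hy
    have := (convex_closedBall x ‖y‖).norm_image_sub_le_of_norm_hasFDerivWithin_le
      (f := fun z => u z - fderiv ℝ u x z) (f' := fun z => fderiv ℝ u z - fderiv ℝ u x)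
      (C := |C| * ‖y‖ ^ (2 * s + ε - 1)) (x := x) (y := x + y)
      (fun z hz => ((hd z (hsub hz)).hasFDerivAt.sub
        (fderiv ℝ u x).hasFDerivAt).hasFDerivWithinAt)
      (fun z hz => by
        refine (hC z (hsub hz) x (by simpa using hδ)).trans ?_
        have : ‖z - x‖ ≤ ‖y‖ := by simpa [dist_eq_norm] using hz
        gcongr
        exact le_abs_self C)
      (by simp) (by simp)
    rw [add_sub_cancel_left, Real.norm_eq_abs, map_add] at this
    calc _ = |u (x + y) - (fderiv ℝ u x x + fderiv ℝ u x y) - (u x - fderiv ℝ u x x)| := by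
          congr 1; ring
      _ ≤ _ := this
      _ = _ := by
        rcases (norm_nonneg y).eq_or_lt with h0 | h0
        · rw [← h0, Real.zero_rpow (by linarith : 2 * s + ε ≠ 0)]; simp
        · rw [mul_assoc, ← Real.rpow_add_one h0.ne']; congr 2; ring

lemma v_far (n : ℕ) (s : ℝ) (hs : s ∈ Set.Ioo (0:ℝ) 1)
    (u : EuclideanSpace ℝ (Fin n) → ℝ) (x : EuclideanSpace ℝ (Fin n))
    (hloc : MeasureTheory.LocallyIntegrable u)
    (hL1s : MeasureTheory.Integrable (fun y : EuclideanSpace ℝ (Fin n) =>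
      |u y| / (1 + ‖y‖ ^ ((n : ℝ) + 2 * s)))) (ρ : ℝ) (hρ : 0 < ρ) :
    AEStronglyMeasurable (fun y => u (x - y)) ∧
    IntegrableOn (fun y => u (x - y) * ‖y‖ ^ (-((n:ℝ) + 2 * s))) {y | ρ < ‖y‖} := by
  have hs0 := hs.1
  have hm : AEStronglyMeasurable (fun y => u (x - y)) :=
    hloc.aestronglyMeasurable.comp_quasiMeasurePreserving
      (quasiMeasurePreserving_sub_left volume x)
  refine ⟨hm, ?_⟩
  set p := (n:ℝ) + 2 * s with hp
  have hp0 : 0 < p := by positivity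
  have h1 := (hL1s.comp_sub_left x).const_mul (ρ ^ (-p) + (‖x‖ / ρ + 1) ^ p)
  refine Integrable.mono' h1.integrableOn ?_ ?_
  · refine (hm.mul ?_).restrict
    exact (by fun_prop : Measurable fun y : EuclideanSpace ℝ (Fin n) => ‖y‖ ^ (-p)).aestronglyMeasurable
  · refine (ae_restrict_iff' (measurableSet_lt measurable_const measurable_norm)).2
      (ae_of_all _ fun y hy => ?_)
    have hy : ρ < ‖y‖ := hy
    have hy0 : 0 < ‖y‖ := hρ.trans hy
    rw [norm_mul, Real.norm_eq_abs, Real.norm_of_nonneg (by positivity), Real.rpow_neg hy0.le,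
      ← div_eq_mul_inv, ← mul_div_assoc, div_le_div_iff₀ (by positivity) (by positivity)]
    have h2 : ‖x - y‖ ≤ (‖x‖ / ρ + 1) * ‖y‖ := by
      refine (norm_sub_le x y).trans ?_
      have : ‖x‖ ≤ ‖x‖ / ρ * ‖y‖ := by
        rw [div_mul_eq_mul_div, le_div_iff₀ hρ]; gcongr
      linarith
    have h3 : ‖x - y‖ ^ p ≤ (‖x‖ / ρ + 1) ^ p * ‖y‖ ^ p := by
      rw [← Real.mul_rpow (by positivity) hy0.le]; gcongr
    have h4 : 1 ≤ ρ ^ (-p) * ‖y‖ ^ p := by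
      rw [Real.rpow_neg hρ.le, ← div_eq_inv_mul, one_le_div (by positivity)]; gcongr
    have h5 := abs_nonneg (u (x - y))
    nlinarith [mul_le_mul_of_nonneg_left (add_le_add h4 h3) h5]

lemma k_bound (n : ℕ) (hn : 1 ≤ n) (s : ℝ) (hs : s ∈ Set.Ioo (0:ℝ) 1) (r : ℝ) (hr : 0 < r)
    (y : EuclideanSpace ℝ (Fin n)) (hy : 2 * r < ‖y‖) :
    (‖y‖ ^ 2 - r ^ 2) ^ (-s) * ‖y‖ ^ (-(n:ℝ)) ≤
      (1/4:ℝ) ^ (-s) * ‖y‖ ^ (-((n:ℝ) + 2 * s)) := by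
  have hs0 := hs.1
  have hy0 : 0 < ‖y‖ := by linarith
  have h2 : 1/4 * ‖y‖ ^ 2 ≤ ‖y‖ ^ 2 - r ^ 2 := by nlinarith
  have h3 : (‖y‖ ^ 2 - r ^ 2) ^ (-s) ≤ (1/4 * ‖y‖ ^ 2) ^ (-s) :=
    Real.rpow_le_rpow_of_nonpos (by positivity) h2 (by linarith)
  rw [Real.mul_rpow (by norm_num) (by positivity), ← Real.rpow_natCast ‖y‖ 2,
    ← Real.rpow_mul hy0.le] at h3
  have h6 : ‖y‖ ^ (-((n:ℝ) + 2 * s)) = ‖y‖ ^ (((2:ℕ):ℝ) * -s) * ‖y‖ ^ (-(n:ℝ)) := by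
    rw [← Real.rpow_add hy0]; congr 1; push_cast; ring
  rw [h6, ← mul_assoc, ← Real.rpow_natCast ‖y‖ 2]
  gcongr

lemma k_nonneg (n : ℕ) (s : ℝ) (r : ℝ) (hr : 0 < r)
    (y : EuclideanSpace ℝ (Fin n)) (hy : r < ‖y‖) :
    0 ≤ (‖y‖ ^ 2 - r ^ 2) ^ (-s) * ‖y‖ ^ (-(n:ℝ)) :=
  mul_nonneg (Real.rpow_nonneg (by nlinarith) _) (by positivity)

lemma sym_set {n : ℕ} (r : ℝ) (F : EuclideanSpace ℝ (Fin n) → ℝ) :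
    (∫ y in {y : EuclideanSpace ℝ (Fin n) | r < ‖y‖}, F (-y) =
      ∫ y in {y : EuclideanSpace ℝ (Fin n) | r < ‖y‖}, F y) ∧
    (IntegrableOn F {y : EuclideanSpace ℝ (Fin n) | r < ‖y‖} →
      IntegrableOn (fun y => F (-y)) {y : EuclideanSpace ℝ (Fin n) | r < ‖y‖}) := by
  have hms : MeasurableSet {y : EuclideanSpace ℝ (Fin n) | r < ‖y‖} :=
    measurableSet_lt measurable_const measurable_norm
  have h : {y : EuclideanSpace ℝ (Fin n) | r < ‖y‖}.indicator (fun y => F (-y)) =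
      fun y => {y : EuclideanSpace ℝ (Fin n) | r < ‖y‖}.indicator F (-y) := by
    funext y; simp [indicator]
  constructor
  · rw [← integral_indicator hms, h, integral_neg_eq_self
      ({y : EuclideanSpace ℝ (Fin n) | r < ‖y‖}.indicator F), integral_indicator hms]
  · intro hF
    rw [← integrable_indicator_iff hms, h]
    exact ((integrable_indicator_iff hms).2 hF).comp_neg

/-- The `s`-mean value property implies `s`-harmonicity.  If
`u ∈ L¹_s(ℝⁿ)` has the required Hölder regularity near `x` and satisfies the
`s`-mean value identity `u(x) = ∫_{|y|>r} A_r(y) u(x−y) dy` for all small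
`r > 0`, then the principal value `lim_{r→0⁺} ∫_{|y|>r} (u(x) − u(x−y))/|y|^{n+2s} dy`
exists and equals `0`, i.e. `u` is `s`-harmonic at `x`. -/
theorem sMeanValue_implies_sHarmonic
    (n : ℕ) (hn : 1 ≤ n) (s : ℝ) (hs : s ∈ Set.Ioo (0:ℝ) 1)
    (u : EuclideanSpace ℝ (Fin n) → ℝ) (x : EuclideanSpace ℝ (Fin n))
    (hloc : MeasureTheory.LocallyIntegrable u)
    (hL1s : MeasureTheory.Integrable (fun y : EuclideanSpace ℝ (Fin n) =>
      |u y| / (1 + ‖y‖ ^ ((n : ℝ) + 2 * s))))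
    (hreg : ∃ δ : ℝ, 0 < δ ∧ ∃ ε₀ : ℝ, 0 < ε₀ ∧
      ((2 * s + ε₀ ≤ 1 ∧
          ∃ C : ℝ, ∀ y ∈ Metric.ball x δ, ∀ z ∈ Metric.ball x δ,
            |u y - u z| ≤ C * ‖y - z‖ ^ (2 * s + ε₀)) ∨
        (1 < 2 * s + ε₀ ∧ 2 * s + ε₀ ≤ 2 ∧
          (∀ y ∈ Metric.ball x δ, DifferentiableAt ℝ u y) ∧
          ∃ C : ℝ, ∀ y ∈ Metric.ball x δ, ∀ z ∈ Metric.ball x δ,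
            ‖fderiv ℝ u y - fderiv ℝ u z‖ ≤ C * ‖y - z‖ ^ (2 * s + ε₀ - 1))))
    (hmean : ∃ r₀ : ℝ, 0 < r₀ ∧ ∀ r : ℝ, 0 < r → r < r₀ →
      u x = ∫ y in {y : EuclideanSpace ℝ (Fin n) | r < ‖y‖},
        ((∫ z in {z : EuclideanSpace ℝ (Fin n) | 1 < ‖z‖},
            (‖z‖ ^ 2 - 1) ^ (-s) * ‖z‖ ^ (-(n : ℝ)))⁻¹ *
          r ^ (2 * s) / ((‖y‖ ^ 2 - r ^ 2) ^ s * ‖y‖ ^ (n : ℝ))) * u (x - y)) :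
    Filter.Tendsto
      (fun r : ℝ => ∫ y in {y : EuclideanSpace ℝ (Fin n) | r < ‖y‖},
        (u x - u (x - y)) / ‖y‖ ^ ((n : ℝ) + 2 * s))
      (𝓝[>] (0:ℝ)) (𝓝 0) := by
  have hs0 := hs.1
  obtain ⟨δ, hδ, ε, hε, C, B, hC, hB, hg⟩ := reg_case n s hs u x hreg
  obtain ⟨r₀, hr₀, hmean⟩ := hmean
  have hms : ∀ r : ℝ, MeasurableSet {y : EuclideanSpace ℝ (Fin n) | r < ‖y‖} := fun r =>
    measurableSet_lt measurable_const measurable_norm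
  obtain ⟨hvm, -⟩ := v_far n s hs u x hloc hL1s 1 one_pos
  have hvfar := fun ρ hρ => (v_far n s hs u x hloc hL1s ρ hρ).2
  set a := ∫ z in {z : EuclideanSpace ℝ (Fin n) | 1 < ‖z‖},
            (‖z‖ ^ 2 - 1) ^ (-s) * ‖z‖ ^ (-(n : ℝ)) with ha
  have hapos : 0 < a := k1_pos n hn s hs
  set p := (n:ℝ) + 2 * s with hp
  have hp0 : 0 < p := by positivity
  set v : EuclideanSpace ℝ (Fin n) → ℝ := fun y => u (x - y) with hv
  set g : EuclideanSpace ℝ (Fin n) → ℝ := fun y => 2 * u x - v y - v (-y) with hgdef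
  have hg1 : ∀ y, ‖y‖ < δ → |g y| ≤ C * ‖y‖ ^ (2 * s + ε) := fun y hy => by
    have := (hg y hy).1
    simpa [hgdef, hv] using this
  have hg2 : ∀ y, ‖y‖ < δ → |v y| ≤ B := fun y hy => (hg y hy).2
  have hvm' : AEStronglyMeasurable (fun y => v (-y)) :=
    hvm.comp_quasiMeasurePreserving (Measure.measurePreserving_neg volume).quasiMeasurePreserving
  have hgm : AEStronglyMeasurable g := (aestronglyMeasurable_const.sub hvm).sub hvm'
  set k : ℝ → EuclideanSpace ℝ (Fin n) → ℝ :=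
    fun r y => (‖y‖ ^ 2 - r ^ 2) ^ (-s) * ‖y‖ ^ (-(n:ℝ)) with hk
  set k0 : EuclideanSpace ℝ (Fin n) → ℝ := fun y => ‖y‖ ^ (-p) with hk0
  have hkm : ∀ r, Measurable (k r) := fun r => by simp only [hk]; fun_prop
  have hk0m : Measurable k0 := by simp only [hk0]; fun_prop
  have hk00 : k0 0 = 0 := by simp [hk0, Real.zero_rpow (by linarith : -p ≠ 0)]
  have hk0n : ∀ y, 0 ≤ k0 y := fun y => by simp only [hk0]; positivity
  have hkint : ∀ r, 0 < r → IntegrableOn (k r) {y | r < ‖y‖} := fun r hr =>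
    (k_scale n hn s hs r hr).1
  have hkval : ∀ r, 0 < r → ∫ y in {y | r < ‖y‖}, k r y = r ^ (-2 * s) * a := fun r hr =>
    (k_scale n hn s hs r hr).2
  have hkn : ∀ r, 0 < r → ∀ y, r < ‖y‖ → 0 ≤ k r y := fun r hr y hy => k_nonneg n s r hr y hy
  have hkb : ∀ r, 0 < r → ∀ y, 2 * r < ‖y‖ → k r y ≤ (1/4:ℝ) ^ (-s) * k0 y :=
    fun r hr y hy => k_bound n hn s hs r hr y hy
  have hksym : ∀ r y, k r (-y) = k r y := fun r y => by simp [hk]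
  have hk0sym : ∀ y, k0 (-y) = k0 y := fun y => by simp [hk0]
  -- integrability of v against k r
  have hvk : ∀ r, 0 < r → 2 * r < δ → IntegrableOn (fun y => v y * k r y) {y | r < ‖y‖} := by
    intro r hr hrδ
    have hsub : {y : EuclideanSpace ℝ (Fin n) | r < ‖y‖} ⊆
        ({y | r < ‖y‖} ∩ {y | 2 * r < ‖y‖}ᶜ) ∪ {y | 2 * r < ‖y‖} := by
      intro y hy
      by_cases h : 2 * r < ‖y‖
      · exact Or.inr h
      · exact Or.inl ⟨hy, h⟩
    have hmm : AEStronglyMeasurable (fun y => v y * k r y) :=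
      hvm.mul (hkm r).aestronglyMeasurable
    refine IntegrableOn.mono_set (IntegrableOn.union ?_ ?_) hsub
    · refine Integrable.mono' (((hkint r hr).mono_set inter_subset_left).const_mul B)
        hmm.restrict ?_
      refine (ae_restrict_iff' ((hms r).inter (hms (2*r)).compl)).2 (ae_of_all _ fun y hy => ?_)
      have hy2 : ‖y‖ ≤ 2 * r := not_lt.1 hy.2
      rw [norm_mul, Real.norm_eq_abs, Real.norm_of_nonneg (hkn r hr y hy.1)]
      exact mul_le_mul_of_nonneg_right (hg2 y (by linarith)) (hkn r hr y hy.1)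
    · refine Integrable.mono' (((hvfar (2 * r) (by linarith)).norm).const_mul ((1/4:ℝ) ^ (-s)))
        hmm.restrict ?_
      refine (ae_restrict_iff' (hms (2*r))).2 (ae_of_all _ fun y hy => ?_)
      have hy : 2 * r < ‖y‖ := hy
      have h1 := hkn r hr y (by linarith)
      have h2 := hkb r hr y hy
      rw [norm_mul (v y) (k r y), norm_mul (u (x - y)) (‖y‖ ^ (-p)), Real.norm_of_nonneg h1,
        Real.norm_of_nonneg (hk0n y)]
      calc _ ≤ ‖v y‖ * ((1/4:ℝ) ^ (-s) * k0 y) := by gcongr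
        _ = _ := by ring
  -- integrals
  have hvkval : ∀ r, 0 < r → r < r₀ →
      ∫ y in {y | r < ‖y‖}, v y * k r y = u x * (r ^ (-2 * s) * a) := by
    intro r hr hrr
    have h1 := hmean r hr hrr
    have h2 : ∫ y in {y : EuclideanSpace ℝ (Fin n) | r < ‖y‖},
        (a⁻¹ * r ^ (2 * s) / ((‖y‖ ^ 2 - r ^ 2) ^ s * ‖y‖ ^ (n : ℝ))) * u (x - y) =
        ∫ y in {y : EuclideanSpace ℝ (Fin n) | r < ‖y‖}, (a⁻¹ * r ^ (2 * s)) * (v y * k r y) := by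
      refine setIntegral_congr_fun (hms r) fun y hy => ?_
      have hy : r < ‖y‖ := hy
      simp only [hk, hv]
      rw [Real.rpow_neg (by nlinarith), Real.rpow_neg (norm_nonneg y), div_eq_mul_inv, mul_inv]
      ring
    rw [h2, integral_const_mul] at h1
    rw [h1, show -2 * s = -(2 * s) by ring, Real.rpow_neg hr.le]
    have : 0 < r ^ (2 * s) := by positivity
    field_simp
  have hgk : ∀ r, 0 < r → r < r₀ → 2 * r < δ →
      IntegrableOn (fun y => g y * k r y) {y | r < ‖y‖} ∧
      ∫ y in {y | r < ‖y‖}, g y * k r y = 0 := by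
    intro r hr hrr hrδ
    have e : (fun y => g y * k r y) =
        fun y => 2 * u x * k r y - v y * k r y - v (-y) * k r (-y) := by
      funext y; simp only [hgdef, hksym]; ring
    obtain ⟨s1, s2⟩ := sym_set r (fun z => v z * k r z)
    have i1 := (hkint r hr).const_mul (2 * u x)
    have i2 := hvk r hr hrδ
    have i3 := s2 i2
    have i12 : Integrable (fun y => 2 * u x * k r y - v y * k r y)
        (volume.restrict {y | r < ‖y‖}) := i1.sub i2
    rw [e]
    refine ⟨i12.sub i3, ?_⟩
    rw [integral_sub i12 i3, integral_sub i1 i2, s1, integral_const_mul, hkval r hr,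
      hvkval r hr hrr]
    ring
  -- far integrability of k0
  have hk0far : ∀ r, 0 < r → IntegrableOn k0 {y | r < ‖y‖} := fun r hr =>
    far_int n hn p (by linarith) r hr
  have hvk0 : ∀ r, 0 < r → IntegrableOn (fun y => v y * k0 y) {y | r < ‖y‖} := hvfar
  have hgk0 : ∀ r, 0 < r → IntegrableOn (fun y => g y * k0 y) {y | r < ‖y‖} ∧
      ∫ y in {y | r < ‖y‖}, g y * k0 y =
        2 * ∫ y in {y | r < ‖y‖}, (u x - u (x - y)) / ‖y‖ ^ p := by
    intro r hr
    have e : (fun y => g y * k0 y) =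
        fun y => 2 * u x * k0 y - v y * k0 y - v (-y) * k0 (-y) := by
      funext y; simp only [hgdef, hk0sym]; ring
    have e2 : (fun y => (u x - u (x - y)) / ‖y‖ ^ p) =
        fun y => u x * k0 y - v y * k0 y := by
      funext y; simp only [hk0, hv]; rw [Real.rpow_neg (norm_nonneg y), div_eq_mul_inv]; ring
    obtain ⟨s1, s2⟩ := sym_set r (fun z => v z * k0 z)
    have i1 := (hk0far r hr).const_mul (2 * u x)
    have i1' := (hk0far r hr).const_mul (u x)
    have i2 := hvk0 r hr
    have i3 := s2 i2
    have i12 : Integrable (fun y => 2 * u x * k0 y - v y * k0 y)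
        (volume.restrict {y | r < ‖y‖}) := i1.sub i2
    rw [e, e2]
    refine ⟨i12.sub i3, ?_⟩
    rw [integral_sub i12 i3, integral_sub i1 i2, s1, integral_sub i1' i2,
      integral_const_mul, integral_const_mul]
    ring
  have hgk0m : AEStronglyMeasurable (fun y => g y * k0 y) := hgm.mul hk0m.aestronglyMeasurable
  have hG : Integrable (fun y => g y * k0 y) := by
    rw [← integrableOn_univ]
    have hsub : (univ : Set (EuclideanSpace ℝ (Fin n))) ⊆
        {y | ‖y‖ ≤ δ / 2} ∪ {y | δ / 2 < ‖y‖} := fun y _ => le_or_gt ‖y‖ (δ / 2)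
    refine IntegrableOn.mono_set (IntegrableOn.union ?_ (hgk0 _ (by linarith)).1) hsub
    refine Integrable.mono' ((near_int n hn ε hε (δ / 2)).const_mul C) hgk0m.restrict ?_
    refine (ae_restrict_iff' (measurableSet_le measurable_norm measurable_const)).2
      (ae_of_all _ fun y hy => ?_)
    have hy : ‖y‖ ≤ δ / 2 := hy
    rw [norm_mul, Real.norm_eq_abs, Real.norm_of_nonneg (hk0n y)]
    rcases eq_or_ne y 0 with rfl | h0
    · rw [hk00, mul_zero]; positivity
    · have h0' : 0 < ‖y‖ := norm_pos_iff.2 h0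
      calc _ ≤ C * ‖y‖ ^ (2 * s + ε) * k0 y :=
            mul_le_mul_of_nonneg_right (hg1 y (by linarith)) (hk0n y)
        _ = _ := by
          simp only [hk0]
          rw [mul_assoc, ← Real.rpow_add h0']; congr 2; rw [hp]; ring
  -- first limit
  have hlim1 : Tendsto (fun r : ℝ => ∫ y in {y | r < ‖y‖}, g y * k0 y) (𝓝[>] 0)
      (𝓝 (∫ y, g y * k0 y)) := by
    simp_rw [← integral_indicator (hms _)]
    refine tendsto_integral_filter_of_dominated_convergence (fun y => ‖g y * k0 y‖) ?_ ?_
      hG.norm ?_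
    · exact Eventually.of_forall fun r => hgk0m.indicator (hms r)
    · exact Eventually.of_forall fun r => ae_of_all _ fun y => norm_indicator_le_norm_self _ _
    · refine ae_of_all _ fun y => ?_
      rcases eq_or_ne y 0 with rfl | h0
      · refine tendsto_const_nhds.congr fun r => ?_
        simp [indicator, hk00]
      · have h0' : 0 < ‖y‖ := norm_pos_iff.2 h0
        refine tendsto_const_nhds.congr' ?_
        filter_upwards [nhdsWithin_le_nhds (Iio_mem_nhds h0')] with r hr
        rw [indicator_of_mem (by exact hr)]
  have hlim2 : Tendsto (fun r : ℝ => ∫ y in {y | 2 * r < ‖y‖}, g y * k r y) (𝓝[>] 0)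
      (𝓝 (∫ y, g y * k0 y)) := by
    simp_rw [← integral_indicator (hms _)]
    refine tendsto_integral_filter_of_dominated_convergence
      (fun y => (1/4:ℝ) ^ (-s) * ‖g y * k0 y‖) ?_ ?_ (hG.norm.const_mul _) ?_
    · exact Eventually.of_forall fun r =>
        (hgm.mul (hkm r).aestronglyMeasurable).indicator (hms (2 * r))
    · filter_upwards [self_mem_nhdsWithin] with r hr
      have hr : 0 < r := hr
      refine ae_of_all _ fun y => ?_
      by_cases hy : 2 * r < ‖y‖
      · rw [indicator_of_mem (by exact hy)]
        have h1 := hkn r hr y (by linarith)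
        have h2 := hkb r hr y hy
        rw [norm_mul (g y) (k r y), norm_mul (g y) (k0 y), Real.norm_of_nonneg h1,
          Real.norm_of_nonneg (hk0n y)]
        calc _ ≤ ‖g y‖ * ((1/4:ℝ) ^ (-s) * k0 y) := by gcongr
          _ = _ := by ring
      · rw [indicator_of_notMem (by exact hy), norm_zero]; positivity
    · refine ae_of_all _ fun y => ?_
      rcases eq_or_ne y 0 with rfl | h0
      · refine tendsto_const_nhds.congr' ?_
        filter_upwards [self_mem_nhdsWithin] with r hr
        have hr : 0 < r := hr
        rw [indicator_of_notMem (by simp; linarith), hk00, mul_zero]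
      · have h0' : 0 < ‖y‖ := norm_pos_iff.2 h0
        have hc : Tendsto (fun r : ℝ => g y * k r y) (𝓝[>] 0) (𝓝 (g y * k0 y)) := by
          have hc1 : ContinuousAt (fun r : ℝ => g y * k r y) 0 := by
            simp only [hk]
            refine continuousAt_const.mul (ContinuousAt.mul ?_ continuousAt_const)
            refine ContinuousAt.rpow_const (by fun_prop) (Or.inl ?_)
            simpa using h0
          have hc2 : k 0 y = k0 y := by
            simp only [hk, hk0]
            rw [zero_pow two_ne_zero, sub_zero, ← Real.rpow_natCast ‖y‖ 2,
              ← Real.rpow_mul h0'.le, ← Real.rpow_add h0']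
            congr 1; rw [hp]; push_cast; ring
          have := hc1.tendsto
          rw [hc2] at this
          exact this.mono_left nhdsWithin_le_nhds
        refine hc.congr' ?_
        filter_upwards [nhdsWithin_le_nhds (Iio_mem_nhds (half_pos h0'))] with r hr
        have hr : r < ‖y‖ / 2 := hr
        rw [indicator_of_mem (by simp only [mem_ofPred_eq]; linarith)]
  -- the remaining annulus
  have hev : ∀ᶠ r : ℝ in 𝓝[>] 0, 0 < r ∧ r < r₀ ∧ 2 * r < δ := by
    filter_upwards [self_mem_nhdsWithin, nhdsWithin_le_nhds (Iio_mem_nhds hr₀),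
      nhdsWithin_le_nhds (Iio_mem_nhds (half_pos hδ))] with r h1 h2 h3
    exact ⟨h1, h2, by have h3 : r < δ / 2 := h3; linarith⟩
  have hlim3 : Tendsto (fun r : ℝ => ∫ y in {y | 2 * r < ‖y‖}, g y * k r y) (𝓝[>] 0) (𝓝 0) := by
    have hz : Tendsto (fun r : ℝ => C * 2 ^ (2 * s + ε) * a * r ^ ε) (𝓝[>] 0) (𝓝 0) := by
      have : ContinuousAt (fun r : ℝ => C * 2 ^ (2 * s + ε) * a * r ^ ε) 0 :=
        continuousAt_const.mul (Real.continuousAt_rpow_const _ _ (Or.inr hε.le))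
      have := this.tendsto
      rw [Real.zero_rpow hε.ne', mul_zero] at this
      exact this.mono_left nhdsWithin_le_nhds
    refine squeeze_zero_norm' ?_ hz
    filter_upwards [hev] with r ⟨hr, hrr, hrδ⟩
    obtain ⟨hi, h0⟩ := hgk r hr hrr hrδ
    have hsub : {y : EuclideanSpace ℝ (Fin n) | 2 * r < ‖y‖} ⊆ {y | r < ‖y‖} := fun y hy => by
      have hy : 2 * r < ‖y‖ := hy
      show r < ‖y‖
      linarith
    have hd := setIntegral_sdiff (hms (2 * r)) hi hsub
    rw [h0, zero_sub] at hd
    rw [← norm_neg, ← hd]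
    set c := C * (2 * r) ^ (2 * s + ε) with hc
    have hc0 : 0 ≤ c := by positivity
    have hki := (hkint r hr).const_mul c
    calc _ ≤ ∫ y in {y : EuclideanSpace ℝ (Fin n) | r < ‖y‖} \ {y | 2 * r < ‖y‖}, c * k r y := by
          refine norm_integral_le_of_norm_le (IntegrableOn.mono_set hki sdiff_subset) ?_
          refine (ae_restrict_iff' ((hms r).diff (hms (2*r)))).2 (ae_of_all _ fun y hy => ?_)
          have hy2 : ‖y‖ ≤ 2 * r := not_lt.1 hy.2
          rw [norm_mul, Real.norm_eq_abs, Real.norm_of_nonneg (hkn r hr y hy.1)]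
          refine mul_le_mul_of_nonneg_right ((hg1 y (by linarith)).trans ?_) (hkn r hr y hy.1)
          rw [hc]
          gcongr
      _ ≤ ∫ y in {y : EuclideanSpace ℝ (Fin n) | r < ‖y‖}, c * k r y := by
          refine setIntegral_mono_set hki ?_ sdiff_subset.eventuallyLE
          exact (ae_restrict_iff' (hms r)).2
            (ae_of_all _ fun y hy => mul_nonneg hc0 (hkn r hr y hy))
      _ = _ := by
          rw [integral_const_mul, hkval r hr, hc, Real.mul_rpow two_pos.le hr.le]
          have : r ^ ε = r ^ (2 * s + ε) * r ^ (-2 * s) := by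
            rw [← Real.rpow_add hr]; congr 1; ring
          rw [this]; ring
  have hfin : ∫ y, g y * k0 y = 0 := tendsto_nhds_unique hlim2 hlim3
  rw [hfin] at hlim1
  have := hlim1.const_mul (1/2 : ℝ)
  rw [mul_zero] at this
  refine this.congr' ?_
  filter_upwards [self_mem_nhdsWithin] with r hr
  rw [(hgk0 r hr).2]
  ring
end

section
/- (Maximum principle for the fractional Laplacian.) Let n ≥ 1, s ∈ (0,1), let Ω ⊂ ℝⁿ be a bounded open set, and let u : ℝⁿ → ℝ be bounded and continuous. Assume that for every x ∈ Ω the function y ↦ (2u(x) − u(x+y) − u(x−y))/|y|^{n+2s} is Lebesgue integrable on ℝⁿ with ∫_{ℝⁿ} (2u(x) − u(x+y) − u(x−y))/|y|^{n+2s} dy ≥ 0 (i.e., (−Δ)^s u ≥ 0 in Ω), and that u(x) ≥ 0 for every x ∈ ℝⁿ ∖ Ω. Then u ≥ 0 on all of ℝⁿ. Moreover, if u(z) = 0 for some z ∈ Ω, then u ≡ 0 on ℝⁿ. -/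
open MeasureTheory Filter Metric Set
open scoped Topology

theorem const_of_min (n : ℕ) (s : ℝ) (u : EuclideanSpace ℝ (Fin n) → ℝ) (hcont : Continuous u)
    (x : EuclideanSpace ℝ (Fin n))
    (hi : MeasureTheory.Integrable (fun y : EuclideanSpace ℝ (Fin n) =>
        (2 * u x - u (x + y) - u (x - y)) / ‖y‖ ^ ((n : ℝ) + 2 * s)))
    (h0 : 0 ≤ ∫ y : EuclideanSpace ℝ (Fin n),
        (2 * u x - u (x + y) - u (x - y)) / ‖y‖ ^ ((n : ℝ) + 2 * s))
    (hmin : ∀ y, u x ≤ u y) : ∀ y, u y = u x := by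
  have hneg : 0 ≤ᵐ[volume] (fun y : EuclideanSpace ℝ (Fin n) =>
        -((2 * u x - u (x + y) - u (x - y)) / ‖y‖ ^ ((n : ℝ) + 2 * s))) := by
    refine Eventually.of_forall fun y => ?_
    have h1 := hmin (x + y)
    have h2 := hmin (x - y)
    have : (2 * u x - u (x + y) - u (x - y)) / ‖y‖ ^ ((n : ℝ) + 2 * s) ≤ 0 :=
      div_nonpos_of_nonpos_of_nonneg (by linarith) (by positivity)
    simpa using this
  have hz : ∫ y : EuclideanSpace ℝ (Fin n),
      -((2 * u x - u (x + y) - u (x - y)) / ‖y‖ ^ ((n : ℝ) + 2 * s)) = 0 := by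
    apply le_antisymm
    · rw [integral_neg]; linarith
    · exact integral_nonneg_of_ae hneg
  have hae := (integral_eq_zero_iff_of_nonneg_ae hneg hi.neg).1 hz
  have hae2 : (fun y => 2 * u x - u (x + y) - u (x - y)) =ᵐ[volume]
      (fun _ : EuclideanSpace ℝ (Fin n) => (0 : ℝ)) := by
    filter_upwards [hae] with y hy
    by_cases h : y = 0
    · subst h; simp; ring
    · have hp : 0 < ‖y‖ ^ ((n : ℝ) + 2 * s) := Real.rpow_pos_of_pos (norm_pos_iff.2 h) _
      have hy' : (2 * u x - u (x + y) - u (x - y)) / ‖y‖ ^ ((n : ℝ) + 2 * s) = 0 :=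
        neg_eq_zero.1 hy
      exact (div_eq_zero_iff.1 hy').resolve_right hp.ne'
  have hall := (Continuous.ae_eq_iff_eq volume (by fun_prop) (by fun_prop)).1 hae2
  intro y
  have h3 := congrFun hall (y - x)
  have h1 := hmin y
  have h2 := hmin (x - (y - x))
  simp only [add_sub_cancel] at h3
  linarith

/-- Maximum principle for the fractional Laplacian.  If `Ω ⊂ ℝⁿ`
is bounded and open, `u` is bounded and continuous, `(−Δ)^s u ≥ 0` in `Ω` (in
the absolutely convergent second-difference sense) and `u ≥ 0` outside `Ω`,
then `u ≥ 0` everywhere; moreover if `u` vanishes at some point of `Ω` then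
`u ≡ 0`. -/
theorem fractional_maximum_principle
    (n : ℕ) (hn : 1 ≤ n) (s : ℝ) (hs : s ∈ Set.Ioo (0:ℝ) 1)
    (Ω : Set (EuclideanSpace ℝ (Fin n))) (hΩo : IsOpen Ω) (hΩb : Bornology.IsBounded Ω)
    (u : EuclideanSpace ℝ (Fin n) → ℝ)
    (hbdd : ∃ M : ℝ, ∀ x, |u x| ≤ M) (hcont : Continuous u)
    (hsup : ∀ x ∈ Ω,
      MeasureTheory.Integrable (fun y : EuclideanSpace ℝ (Fin n) =>
        (2 * u x - u (x + y) - u (x - y)) / ‖y‖ ^ ((n : ℝ) + 2 * s)) ∧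
      0 ≤ ∫ y : EuclideanSpace ℝ (Fin n),
        (2 * u x - u (x + y) - u (x - y)) / ‖y‖ ^ ((n : ℝ) + 2 * s))
    (hext : ∀ x ∉ Ω, 0 ≤ u x) :
    (∀ x, 0 ≤ u x) ∧ (∀ z ∈ Ω, u z = 0 → ∀ x, u x = 0) := by
  have key : ∀ x ∈ Ω, (∀ y, u x ≤ u y) → ∀ y, u y = u x := fun x hx hm =>
    const_of_min n s u hcont x (hsup x hx).1 (hsup x hx).2 hm
  have hpos : ∀ x, 0 ≤ u x := by
    intro x
    by_contra! hx
    have hxΩ : x ∈ Ω := by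
      by_contra h
      exact absurd (hext x h) (not_le.2 hx)
    obtain ⟨m, -, hm⟩ := hΩb.isCompact_closure.exists_isMinOn ⟨x, subset_closure hxΩ⟩
      hcont.continuousOn
    have hmx : u m ≤ u x := hm (subset_closure hxΩ)
    have hmΩ : m ∈ Ω := by
      by_contra h
      linarith [hext m h]
    have hc := key m hmΩ (fun y => by
      by_cases hy : y ∈ Ω
      · exact hm (subset_closure hy)
      · linarith [hext y hy])
    haveI : Nonempty (Fin n) := ⟨⟨0, hn⟩⟩
    have hne : Ω ≠ Set.univ := by
      rintro rfl
      exact NormedSpace.unbounded_univ ℝ (EuclideanSpace ℝ (Fin n)) hΩb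
    obtain ⟨p, hp⟩ := (Set.ne_univ_iff_exists_notMem Ω).1 hne
    linarith [hext p hp, hc p]
  refine ⟨hpos, fun z hz hz0 x => ?_⟩
  rw [key z hz (fun y => hz0 ▸ hpos y) x, hz0]
end

section
/- (Comparison principle for the fractional Laplacian.) Let n ≥ 1, s ∈ (0,1), let Ω ⊂ ℝⁿ be a bounded open set, and let u, v : ℝⁿ → ℝ be bounded and continuous. Set w := u − v and assume that for every x ∈ Ω the function y ↦ (2w(x) − w(x+y) − w(x−y))/|y|^{n+2s} is Lebesgue integrable on ℝⁿ with ∫_{ℝⁿ} (2w(x) − w(x+y) − w(x−y))/|y|^{n+2s} dy ≥ 0 (i.e., (−Δ)^s u ≥ (−Δ)^s v in Ω), and that u(x) ≥ v(x) for every x ∈ ℝⁿ ∖ Ω. Then u ≥ v on all of ℝⁿ. -/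
open MeasureTheory Filter Metric Set
open scoped Topology

/-- Comparison principle for the fractional Laplacian.  If `Ω` is
bounded and open, `u, v` are bounded and continuous, `(−Δ)^s (u − v) ≥ 0` in
`Ω` (in the absolutely convergent second-difference sense) and `u ≥ v` outside
`Ω`, then `u ≥ v` on all of `ℝⁿ`. -/
theorem fractional_comparison_principle
    (n : ℕ) (hn : 1 ≤ n) (s : ℝ) (hs : s ∈ Set.Ioo (0:ℝ) 1)
    (Ω : Set (EuclideanSpace ℝ (Fin n))) (hΩo : IsOpen Ω) (hΩb : Bornology.IsBounded Ω)
    (u v : EuclideanSpace ℝ (Fin n) → ℝ)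
    (hubdd : ∃ M : ℝ, ∀ x, |u x| ≤ M) (hucont : Continuous u)
    (hvbdd : ∃ M : ℝ, ∀ x, |v x| ≤ M) (hvcont : Continuous v)
    (hsup : ∀ x ∈ Ω,
      MeasureTheory.Integrable (fun y : EuclideanSpace ℝ (Fin n) =>
        (2 * (u - v) x - (u - v) (x + y) - (u - v) (x - y)) / ‖y‖ ^ ((n : ℝ) + 2 * s)) ∧
      0 ≤ ∫ y : EuclideanSpace ℝ (Fin n),
        (2 * (u - v) x - (u - v) (x + y) - (u - v) (x - y)) / ‖y‖ ^ ((n : ℝ) + 2 * s))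
    (hext : ∀ x ∉ Ω, v x ≤ u x) :
    ∀ x, v x ≤ u x := by
  intro x1
  by_contra hx1
  push Not at hx1
  have hx1Ω : x1 ∈ Ω := by
    by_contra h
    exact absurd (hext x1 h) (not_le.mpr hx1)
  have hc : IsCompact (closure Ω) := hΩb.isCompact_closure
  obtain ⟨x0, -, hx0min⟩ := hc.exists_isMinOn ⟨x1, subset_closure hx1Ω⟩
    (hucont.sub hvcont).continuousOn
  have hmin : ∀ x ∈ Ω, u x0 - v x0 ≤ u x - v x := fun x hx => hx0min (subset_closure hx)
  have hneg : u x0 - v x0 < 0 := by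
    have := hmin x1 hx1Ω
    linarith
  have hx0 : x0 ∈ Ω := by
    by_contra h
    have := hext x0 h
    linarith
  have hglob : ∀ x, u x0 - v x0 ≤ u x - v x := by
    intro x
    by_cases hx : x ∈ Ω
    · exact hmin x hx
    · have := hext x hx
      linarith
  obtain ⟨hint, hnn⟩ := hsup x0 hx0
  set F : EuclideanSpace ℝ (Fin n) → ℝ := fun y =>
    (2 * (u - v) x0 - (u - v) (x0 + y) - (u - v) (x0 - y)) / ‖y‖ ^ ((n : ℝ) + 2 * s) with hF
  have hFle : ∀ y, 0 ≤ -F y := by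
    intro y
    have h1 := hglob (x0 + y)
    have h2 := hglob (x0 - y)
    have : F y ≤ 0 := by
      apply div_nonpos_of_nonpos_of_nonneg
      · simp only [Pi.sub_apply]
        linarith
      · positivity
    linarith
  have hzero : ∫ y, -F y = 0 := by
    apply le_antisymm
    · rw [integral_neg]
      linarith
    · exact integral_nonneg hFle
  have hae := (integral_eq_zero_iff_of_nonneg hFle hint.neg).mp hzero
  have hdense := Measure.dense_of_ae hae
  obtain ⟨R, hR⟩ := hΩb.subset_closedBall x0
  haveI : Nonempty (Fin n) := ⟨⟨0, hn⟩⟩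
  obtain ⟨z, hz⟩ := NormedSpace.exists_lt_norm ℝ (EuclideanSpace ℝ (Fin n)) (max R 0)
  have hopen : IsOpen {y : EuclideanSpace ℝ (Fin n) | max R 0 < ‖y‖} :=
    isOpen_lt continuous_const continuous_norm
  obtain ⟨y, hy, hy0⟩ := hdense.inter_open_nonempty _ hopen ⟨z, hz⟩
  have hyR : R < ‖y‖ := lt_of_le_of_lt (le_max_left _ _) hy
  have hypos : 0 < ‖y‖ := lt_of_le_of_lt (le_max_right _ _) hy
  have ha : x0 + y ∉ Ω := by
    intro h
    have := hR h
    simp [mem_closedBall, dist_eq_norm] at this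
    linarith
  have hb : x0 - y ∉ Ω := by
    intro h
    have := hR h
    simp [mem_closedBall, dist_eq_norm] at this
    linarith
  have h1 := hext _ ha
  have h2 := hext _ hb
  have hlt : F y < 0 := by
    apply div_neg_of_neg_of_pos
    · simp only [Pi.sub_apply]
      linarith
    · positivity
  have hy1 : -F y = 0 := hy0
  linarith
end
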